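/- arXiv:1408.2439 — 2 statements merged into one kernel-verified Lean document; each statement's English description precedes it below -/
import Mathlib

section
/- Let Δ be a root basis of level 1 or 2 in a non-degenerate quadratic space (V,B). Then any two distinct vectors x, y ∈ Ω satisfy B(x,y) ≤ 0; equivalently, B(ω_I, w(ω_J)) ≤ 0 for all weights ω_I, ω_J ∈ Δ* and all w ∈ W with w(ω_J) ≠ ω_I. -/
open scoped BigOperators

namespace BoydMaxwell

variable {V : Type*} [AddCommGroup V] [Module ℝ V]

/-- `(V, B)` is a Lorentz space: `B` is non-degenerate with exactly one negative
eigenvalue, i.e. there is a time-like vector but every subspace on which `B` is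
negative definite has dimension at most `1`. -/
def IsLorentz (B : LinearMap.BilinForm ℝ V) : Prop :=
  B.Nondegenerate ∧ (∃ v : V, B v v < 0) ∧
    ∀ W : Submodule ℝ V, (∀ v ∈ W, v ≠ 0 → B v v < 0) → Module.finrank ℝ W ≤ 1

/-- A root basis in the quadratic space `(V, B)`. -/
structure IsRootBasis (B : LinearMap.BilinForm ℝ V) (Δ : Finset V) : Prop where
  unit : ∀ α ∈ Δ, B α α = 1
  offdiag : ∀ α ∈ Δ, ∀ β ∈ Δ, α ≠ β →
    B α β ≤ -1 ∨ ∃ k : ℕ, 2 ≤ k ∧ B α β = -Real.cos (Real.pi / k)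
  posIndep : ∀ c : V → ℝ, (∀ α ∈ Δ, 0 ≤ c α) →
    (∑ α ∈ Δ, c α • α) = 0 → ∀ α ∈ Δ, c α = 0
  spans : Submodule.span ℝ (Δ : Set V) = ⊤

/-- The reflection `s_α : x ↦ x - 2 B(α,x) α`. -/
def reflection (B : LinearMap.BilinForm ℝ V) (α : V) : V →ₗ[ℝ] V :=
  LinearMap.id - (B α).smulRight ((2 : ℝ) • α)

/-- The Weyl group `W`: the subgroup of linear automorphisms generated by the
reflections in the simple roots. -/
def weylGroup (B : LinearMap.BilinForm ℝ V) (Δ : Finset V) : Subgroup (V ≃ₗ[ℝ] V) :=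
  Subgroup.closure { g : V ≃ₗ[ℝ] V | ∃ α ∈ Δ, (g : V →ₗ[ℝ] V) = reflection B α }

/-- The set of roots `Φ = W(Δ)`. -/
def roots (B : LinearMap.BilinForm ℝ V) (Δ : Finset V) : Set V :=
  { x | ∃ w ∈ weylGroup B Δ, ∃ α ∈ Δ, x = w α }

/-- The polyhedral cone of non-negative linear combinations of a finite set. -/
def cone (Δ : Finset V) : Set V :=
  { x | ∃ c : V → ℝ, (∀ α ∈ Δ, 0 ≤ c α) ∧ x = ∑ α ∈ Δ, c α • α }

/-- `F` is a face of the convex set `C`. -/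
def IsFace (C F : Set V) : Prop :=
  F ⊆ C ∧ Convex ℝ F ∧ ∀ x ∈ C, ∀ y ∈ C, ∀ t : ℝ, 0 < t → t < 1 →
    t • x + (1 - t) • y ∈ F → x ∈ F ∧ y ∈ F

/-- `I ⊆ Δ` is an `l`-facial subset: `Cone(I)` is a face of `Cone(Δ)` and
`Span(I)` has codimension `l` in `V`. -/
def IsFacial (Δ I : Finset V) (l : ℕ) : Prop :=
  I ⊆ Δ ∧ IsFace (cone Δ) (cone I) ∧
    Module.finrank ℝ (Submodule.span ℝ (I : Set V)) + l = Module.finrank ℝ V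

/-- `B` is positive semidefinite on the span of every `l`-facial subset. -/
def LevelLE (B : LinearMap.BilinForm ℝ V) (Δ : Finset V) (l : ℕ) : Prop :=
  ∀ I : Finset V, IsFacial Δ I l → ∀ x ∈ Submodule.span ℝ (I : Set V), 0 ≤ B x x

/-- The root system generated by `Δ` has level exactly `l`: `l` is the smallest
integer such that `B` is positive semidefinite on the span of every `l`-facial
subset of `Δ`. -/
def HasLevel (B : LinearMap.BilinForm ℝ V) (Δ : Finset V) (l : ℕ) : Prop :=
  LevelLE B Δ l ∧ ∀ m : ℕ, m < l → ¬ LevelLE B Δ m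

/-- `ω` is the weight associated to the `1`-facial subset `I`. -/
def IsWeight (B : LinearMap.BilinForm ℝ V) (Δ I : Finset V) (ω : V) : Prop :=
  IsFacial Δ I 1 ∧ (∀ α ∈ I, B α ω = 0) ∧
    (∀ α ∈ Δ, α ∉ I → 0 < B α ω) ∧
    (∀ α ∈ Δ, α ∉ I → 1 ≤ B α ω) ∧ (∃ α ∈ Δ, α ∉ I ∧ B α ω = 1)

/-- The set `Δ*` of weights. -/
def weights (B : LinearMap.BilinForm ℝ V) (Δ : Finset V) : Set V :=
  { ω | ∃ I : Finset V, IsWeight B Δ I ω }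

/-- The orbit `Ω = W(Δ*)`. -/
def Omega (B : LinearMap.BilinForm ℝ V) (Δ : Finset V) : Set V :=
  { x | ∃ w ∈ weylGroup B Δ, ∃ ω ∈ weights B Δ, x = w ω }

/-- Two vectors are disjoint: `B(x,y) ≤ 0` and `B` is not positive definite on
`Span{x,y}`. -/
def DisjointVec (B : LinearMap.BilinForm ℝ V) (x y : V) : Prop :=
  B x y ≤ 0 ∧ ¬ ∀ z ∈ Submodule.span ℝ ({x, y} : Set V), z ≠ 0 → 0 < B z z

/-- The fundamental chamber `C* = {x | B(x, α) ≥ 0 for all α ∈ Δ}`. -/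
def chamber (B : LinearMap.BilinForm ℝ V) (Δ : Finset V) : Set V :=
  { x | ∀ α ∈ Δ, 0 ≤ B x α }

/-- The Tits cone `T = ⋃_{w ∈ W} w(C*)`. -/
def titsCone (B : LinearMap.BilinForm ℝ V) (Δ : Finset V) : Set V :=
  { x | ∃ w ∈ weylGroup B Δ, ∃ y ∈ chamber B Δ, x = w y }

/-- The convex cone generated by an arbitrary set. -/
def coneOf (X : Set V) : Set V :=
  { x | ∃ (s : Finset V) (c : V → ℝ), (↑s ⊆ X) ∧ (∀ v ∈ s, 0 ≤ c v) ∧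
      x = ∑ v ∈ s, c v • v }


/-! ### Finitely generated cones -/

lemma farkas_aux {ι : Type*} [DecidableEq ι] (s : Finset ι) :
    ∀ (a : ι → V) (b : V),
      (∀ f : V →ₗ[ℝ] ℝ, (∀ i ∈ s, 0 ≤ f (a i)) → 0 ≤ f b) →
      ∃ c : ι → ℝ, (∀ i ∈ s, 0 ≤ c i) ∧ b = ∑ i ∈ s, c i • a i := by
  induction s using Finset.induction_on with
  | empty =>
    intro a b h
    refine ⟨0, by simp, ?_⟩
    simp only [Finset.sum_empty]
    rw [← Module.forall_dual_apply_eq_zero_iff ℝ]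
    intro f
    have h1 := h f (by simp)
    have h2 := h (-f) (by simp)
    simp only [LinearMap.neg_apply] at h2
    linarith
  | insert j s hj ih =>
    intro a b h
    by_cases hb : ∀ f : V →ₗ[ℝ] ℝ, (∀ i ∈ s, 0 ≤ f (a i)) → 0 ≤ f b
    · obtain ⟨c, hc, hbc⟩ := ih a b hb
      refine ⟨fun i => if i = j then 0 else c i, ?_, ?_⟩
      · intro i hi
        by_cases hij : i = j
        · simp [hij]
        · simp only [hij, if_false]
          exact hc i ((Finset.mem_insert.1 hi).resolve_left hij)
      · rw [Finset.sum_insert hj, hbc]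
        simp only [if_true, zero_smul, zero_add]
        refine Finset.sum_congr rfl fun i hi => ?_
        have : i ≠ j := fun e => hj (e ▸ hi)
        simp [this]
    · push Not at hb
      obtain ⟨f0, hf0, hfb⟩ := hb
      have hneg : f0 (a j) < 0 := by
        by_contra hcon
        push Not at hcon
        have := h f0 (by
          intro i hi
          rcases Finset.mem_insert.1 hi with rfl | hi
          · exact hcon
          · exact hf0 i hi)
        linarith
      -- rescale
      set g : V →ₗ[ℝ] ℝ := (-(f0 (a j)))⁻¹ • f0 with hg
      have hpos : 0 < (-(f0 (a j)))⁻¹ := inv_pos.2 (by linarith)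
      have hgj : g (a j) = -1 := by
        simp only [hg, LinearMap.smul_apply, smul_eq_mul]
        have := hneg.ne
        rw [inv_neg, neg_mul, inv_mul_cancel₀ this]
      have hgs : ∀ i ∈ s, 0 ≤ g (a i) := fun i hi => by
        simp only [hg, LinearMap.smul_apply, smul_eq_mul]
        exact mul_nonneg hpos.le (hf0 i hi)
      have hgb : g b < 0 := by
        simp only [hg, LinearMap.smul_apply, smul_eq_mul]
        exact mul_neg_of_pos_of_neg hpos hfb
      obtain ⟨c, hc, hbc⟩ := ih (fun i => a i + g (a i) • a j) (b + g b • a j) (by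
        intro f hf
        have := h (f + f (a j) • g) (by
          intro i hi
          rcases Finset.mem_insert.1 hi with rfl | hi
          · simp [hgj]
          · have := hf i hi
            simp only [map_add, map_smul, smul_eq_mul] at this
            simp only [LinearMap.add_apply, LinearMap.smul_apply, smul_eq_mul]
            linarith)
        simp only [LinearMap.add_apply, LinearMap.smul_apply, smul_eq_mul] at this
        simp only [map_add, map_smul, smul_eq_mul]
        linarith)
      refine ⟨fun i => if i = j then (∑ i ∈ s, c i * g (a i)) - g b else c i, ?_, ?_⟩
      · intro i hi
        by_cases hij : i = j
        · simp only [hij, if_true]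
          have : 0 ≤ ∑ i ∈ s, c i * g (a i) :=
            Finset.sum_nonneg fun i hi => mul_nonneg (hc i hi) (hgs i hi)
          linarith
        · simp only [hij, if_false]
          exact hc i ((Finset.mem_insert.1 hi).resolve_left hij)
      · rw [Finset.sum_insert hj]
        have e : ∑ i ∈ s, (if i = j then (∑ i ∈ s, c i * g (a i)) - g b else c i) • a i
            = ∑ i ∈ s, c i • a i := by
          refine Finset.sum_congr rfl fun i hi => ?_
          have : i ≠ j := fun e => hj (e ▸ hi)
          simp [this]
        rw [e]
        simp only [if_true, smul_add, Finset.sum_add_distrib, smul_smul] at hbc ⊢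
        rw [← Finset.sum_smul] at hbc
        rw [sub_smul]
        refine (eq_sub_of_add_eq hbc).trans ?_
        abel

lemma cone_nonneg {I : Finset V} {f : V →ₗ[ℝ] ℝ} (hf : ∀ β ∈ I, 0 ≤ f β) {z : V}
    (hz : z ∈ cone I) : 0 ≤ f z := by
  obtain ⟨c, hc, rfl⟩ := hz
  simp only [map_sum, map_smul, smul_eq_mul]
  exact Finset.sum_nonneg fun i hi => mul_nonneg (hc i hi) (hf i hi)

lemma cone_add {I : Finset V} {x y : V} (hx : x ∈ cone I) (hy : y ∈ cone I) :
    x + y ∈ cone I := by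
  obtain ⟨c, hc, rfl⟩ := hx
  obtain ⟨d, hd, rfl⟩ := hy
  exact ⟨fun i => c i + d i, fun i hi => add_nonneg (hc i hi) (hd i hi), by
    simp [add_smul, Finset.sum_add_distrib]⟩

lemma cone_smul {I : Finset V} {x : V} {t : ℝ} (ht : 0 ≤ t) (hx : x ∈ cone I) :
    t • x ∈ cone I := by
  obtain ⟨c, hc, rfl⟩ := hx
  exact ⟨fun i => t * c i, fun i hi => mul_nonneg ht (hc i hi), by
    simp [Finset.smul_sum, smul_smul]⟩

lemma cone_zero (I : Finset V) : (0 : V) ∈ cone I := ⟨0, by simp, by simp⟩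

lemma cone_of_mem {I : Finset V} {x : V} (hx : x ∈ I) : x ∈ cone I := by
  classical
  refine ⟨fun i => if i = x then 1 else 0, fun i _ => by positivity, ?_⟩
  simp [ite_smul, hx]

lemma cone_mono {I J : Finset V} (h : I ⊆ J) : cone I ⊆ cone J := by
  rintro x ⟨c, hc, rfl⟩
  have : ∀ s : Finset V, s ⊆ I → ∑ α ∈ s, c α • α ∈ cone J := by
    classical
    intro s
    induction s using Finset.induction_on with
    | empty => intro _; simpa using cone_zero J
    | insert j s hj ih =>
      intro hs
      rw [Finset.sum_insert hj]
      exact cone_add (cone_smul (hc j (hs (Finset.mem_insert_self _ _)))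
        (cone_of_mem (h (hs (Finset.mem_insert_self _ _)))))
        (ih ((Finset.subset_insert _ _).trans hs))
  exact this I subset_rfl

lemma cone_sub_span {I : Finset V} {x : V} (hx : x ∈ cone I) :
    x ∈ Submodule.span ℝ (I : Set V) := by
  obtain ⟨c, _, rfl⟩ := hx
  exact Submodule.sum_mem _ fun i hi => Submodule.smul_mem _ _ (Submodule.subset_span hi)

open Classical in
lemma cone_zero_face {I : Finset V} {f : V →ₗ[ℝ] ℝ} (hf : ∀ β ∈ I, 0 ≤ f β) {z : V}
    (hz : z ∈ cone I) (h0 : f z = 0) : z ∈ cone (I.filter fun β => f β = 0) := by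
  obtain ⟨c, hc, rfl⟩ := hz
  refine ⟨c, fun i hi => hc i (Finset.mem_filter.1 hi).1, ?_⟩
  rw [Finset.sum_filter]
  refine Finset.sum_congr rfl fun i hi => ?_
  simp only [map_sum, map_smul, smul_eq_mul] at h0
  have := (Finset.sum_eq_zero_iff_of_nonneg
    fun i hi => mul_nonneg (hc i hi) (hf i hi)).1 h0 i hi
  split_ifs with h
  · rfl
  · rw [(mul_eq_zero.1 this).resolve_right h, zero_smul]

lemma farkas {I : Finset V} {b : V} (hb : b ∉ cone I) :
    ∃ f : V →ₗ[ℝ] ℝ, (∀ β ∈ I, 0 ≤ f β) ∧ f b < 0 := by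
  classical
  by_contra hcon
  push Not at hcon
  exact hb (farkas_aux I id b (fun f hf => hcon f hf))

/-- Moving from a point of the cone in a direction that is not recessive, we leave the
cone through a proper face. -/
lemma exit_lemma {I : Finset V} {v x : V} (hv : v ∈ cone I)
    (hx : x ∈ Submodule.span ℝ (I : Set V)) (hnx : -x ∉ cone I) :
    ∃ t : ℝ, 0 ≤ t ∧ v - t • x ∈ cone I ∧ ∃ f : V →ₗ[ℝ] ℝ, (∀ β ∈ I, 0 ≤ f β) ∧
      (∃ β ∈ I, 0 < f β) ∧ f (v - t • x) = 0 := by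
  classical
  obtain ⟨f0, hf0, hf0x⟩ := farkas hnx
  rw [map_neg] at hf0x
  let T : Set ℝ := {t | 0 ≤ t ∧ v - t • x ∈ cone I}
  have hT0 : (0 : ℝ) ∈ T := ⟨le_rfl, by simpa using hv⟩
  have hbdd : BddAbove T := by
    refine ⟨f0 v / f0 x, ?_⟩
    rintro t ⟨_, ht⟩
    have := cone_nonneg hf0 ht
    simp only [map_sub, map_smul, smul_eq_mul] at this
    rw [le_div_iff₀ (by linarith)]
    linarith
  set t0 := sSup T with ht0
  have ht0n : 0 ≤ t0 := le_csSup hbdd hT0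
  have hmem : v - t0 • x ∈ cone I := by
    by_contra hcon
    obtain ⟨f, hf, hfn⟩ := farkas hcon
    simp only [map_sub, map_smul, smul_eq_mul] at hfn
    have hfv := cone_nonneg hf hv
    have hfx : 0 < f x := by
      by_contra h
      push Not at h
      nlinarith
    have : t0 ≤ f v / f x := csSup_le ⟨0, hT0⟩ (by
      rintro t ⟨_, ht⟩
      have := cone_nonneg hf ht
      simp only [map_sub, map_smul, smul_eq_mul] at this
      rw [le_div_iff₀ hfx]
      linarith)
    rw [le_div_iff₀ hfx] at this
    linarith
  refine ⟨t0, ht0n, hmem, ?_⟩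
  set z := v - t0 • x with hz
  have hnot : -x ∉ cone (insert (-z) I) := by
    rintro ⟨c, hc, hcx⟩
    have key : ∃ s : ℝ, 0 ≤ s ∧ ∃ y ∈ cone I, -x = s • (-z) + y := by
      by_cases hzI : -z ∈ I
      · rw [Finset.insert_eq_of_mem hzI] at hcx hc
        exact ⟨0, le_rfl, _, ⟨c, hc, rfl⟩, by simpa using hcx⟩
      · rw [Finset.sum_insert hzI] at hcx
        exact ⟨c (-z), hc _ (Finset.mem_insert_self _ _), _,
          ⟨c, fun i hi => hc i (Finset.mem_insert_of_mem hi), rfl⟩, hcx⟩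
    obtain ⟨s, hs, y, hy, hxy⟩ := key
    rcases hs.eq_or_lt with rfl | hs
    · rw [zero_smul, zero_add] at hxy
      exact hnx (hxy ▸ hy)
    · have : t0 + s⁻¹ ∈ T := by
        refine ⟨by positivity, ?_⟩
        have e : v - (t0 + s⁻¹) • x = s⁻¹ • y := by
          have : y = s • z - x := by
            rw [smul_neg] at hxy
            rw [sub_eq_add_neg, hxy]; abel
          rw [this, smul_sub, smul_smul, inv_mul_cancel₀ hs.ne', one_smul, add_smul, hz]
          abel
        rw [e]
        exact cone_smul (by positivity) hy
      have h1 := le_csSup hbdd this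
      have : 0 < s⁻¹ := by positivity
      linarith
  obtain ⟨f, hf, hfx⟩ := farkas hnot
  have hfI : ∀ β ∈ I, 0 ≤ f β := fun β hβ => hf β (Finset.mem_insert_of_mem hβ)
  refine ⟨f, hfI, ?_, ?_⟩
  · by_contra hcon
    push Not at hcon
    have : f x = 0 := by
      have : Submodule.span ℝ (I : Set V) ≤ LinearMap.ker f := by
        rw [Submodule.span_le]
        intro β hβ
        exact le_antisymm (hcon β hβ) (hfI β hβ)
      exact this hx
    rw [map_neg, this] at hfx
    simp at hfx
  · have h1 := hf (-z) (Finset.mem_insert_self _ _)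
    have h2 := cone_nonneg hfI hmem
    rw [map_neg] at h1
    linarith


/-- Every boundary point of a finitely generated cone lies on a facet. -/
lemma exists_facet [FiniteDimensional ℝ V] {I : Finset V} {z : V} (hz : z ∈ cone I)
    {f : V →ₗ[ℝ] ℝ} (hf : ∀ β ∈ I, 0 ≤ f β) (hpos : ∃ β ∈ I, 0 < f β) (hfz : f z = 0) :
    ∃ g : V →ₗ[ℝ] ℝ, (∀ β ∈ I, 0 ≤ g β) ∧ g z = 0 ∧
      ∃ K : Finset V, K ⊆ I ∧ (∀ β ∈ I, β ∈ K ↔ g β = 0) ∧ z ∈ cone K ∧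
      Module.finrank ℝ (Submodule.span ℝ (K : Set V)) + 1 =
        Module.finrank ℝ (Submodule.span ℝ (I : Set V)) := by
  classical
  let Kf : (V →ₗ[ℝ] ℝ) → Finset V := fun g => I.filter fun β => g β = 0
  let P : ℕ → Prop := fun n => ∃ g : V →ₗ[ℝ] ℝ, (∀ β ∈ I, 0 ≤ g β) ∧ (∃ β ∈ I, 0 < g β) ∧
    g z = 0 ∧ Module.finrank ℝ (Submodule.span ℝ (Kf g : Set V)) = n
  have hKspan : ∀ g : V →ₗ[ℝ] ℝ, Submodule.span ℝ (Kf g : Set V) ≤ LinearMap.ker g := by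
    intro g
    rw [Submodule.span_le]
    intro β hβ
    exact (Finset.mem_filter.1 hβ).2
  have hKI : ∀ g : V →ₗ[ℝ] ℝ, Submodule.span ℝ (Kf g : Set V) ≤ Submodule.span ℝ (I : Set V) :=
    fun g => Submodule.span_mono (by exact_mod_cast Finset.filter_subset _ _)
  have hPb : ∀ n, P n → n ≤ Module.finrank ℝ V := by
    rintro n ⟨g, _, _, _, rfl⟩
    exact Submodule.finrank_le _
  have hPex : P (Module.finrank ℝ (Submodule.span ℝ (Kf f : Set V))) := ⟨f, hf, hpos, hfz, rfl⟩
  have hPs := Nat.findGreatest_spec (P := P) (hPb _ hPex) hPex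
  set n := Nat.findGreatest P (Module.finrank ℝ V) with hn
  have hmax : ∀ m, P m → m ≤ n := fun m hm => Nat.le_findGreatest (hPb m hm) hm
  obtain ⟨g, hg, ⟨β0, hβ0, hgβ0⟩, hgz, hgn⟩ := hPs
  refine ⟨g, hg, hgz, Kf g, Finset.filter_subset _ _, ?_, cone_zero_face hg hz hgz, ?_⟩
  · intro β hβ; simp [Kf, hβ]
  have hlt : Module.finrank ℝ (Submodule.span ℝ (Kf g : Set V)) <
      Module.finrank ℝ (Submodule.span ℝ (I : Set V)) := by
    apply Submodule.finrank_lt_finrank_of_lt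
    refine lt_of_le_of_ne (hKI g) fun e => ?_
    have : β0 ∈ Submodule.span ℝ (Kf g : Set V) := e ▸ Submodule.subset_span hβ0
    have := hKspan g this
    rw [LinearMap.mem_ker] at this
    linarith
  by_contra hne
  have hlt2 : n + 1 < Module.finrank ℝ (Submodule.span ℝ (I : Set V)) := by omega
  set S := Submodule.span ℝ (Kf g : Set V) ⊔ Submodule.span ℝ {β0} with hS
  have hSle : Module.finrank ℝ S ≤ n + 1 := by
    refine (Submodule.finrank_add_le_finrank_add_finrank _ _).trans ?_
    rw [hgn]
    gcongr
    exact (finrank_span_le_card _).trans (by simp)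
  obtain ⟨γ, hγ, hγS⟩ : ∃ γ ∈ I, γ ∉ S := by
    by_contra hcon
    push Not at hcon
    have : Submodule.span ℝ (I : Set V) ≤ S := Submodule.span_le.2 hcon
    have := Submodule.finrank_mono this
    omega
  obtain ⟨h, hhγ, hhS⟩ : ∃ h : V →ₗ[ℝ] ℝ, h γ < 0 ∧ ∀ x ∈ S, h x = 0 := by
    obtain ⟨h, h1, h2⟩ := Submodule.exists_le_ker_of_notMem hγS
    rcases lt_or_gt_of_ne h1 with h3 | h3
    · exact ⟨h, h3, fun x hx => h2 hx⟩
    · refine ⟨-h, by simpa using h3, fun x hx => ?_⟩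
      have : h x = 0 := h2 hx
      simp [this]
  -- ratio test
  obtain ⟨α, hα, hαmin⟩ := Finset.exists_min_image (I.filter fun β => h β < 0)
    (fun β => g β / (- h β)) ⟨γ, by simp [hγ, hhγ]⟩
  rw [Finset.mem_filter] at hα
  have hgα : 0 < g α := by
    refine lt_of_le_of_ne (hg α hα.1) fun e => ?_
    have : α ∈ S := Submodule.mem_sup_left (Submodule.subset_span (by simp [Kf, hα.1, ← e]))
    have := hhS _ this
    linarith
  set t := g α / (- h α) with ht
  have htpos : 0 < t := div_pos hgα (by linarith)
  have hP : P (Module.finrank ℝ (Submodule.span ℝ (Kf (g + t • h) : Set V))) := by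
    refine ⟨g + t • h, ?_, ⟨β0, hβ0, ?_⟩, ?_, rfl⟩
    · intro β hβ
      simp only [LinearMap.add_apply, LinearMap.smul_apply, smul_eq_mul]
      by_cases hhβ : h β < 0
      · have := hαmin β (by simp [hβ, hhβ])
        rw [le_div_iff₀ (by linarith)] at this
        linarith
      · push Not at hhβ
        have := hg β hβ
        positivity
    · simp only [LinearMap.add_apply, LinearMap.smul_apply, smul_eq_mul]
      rw [hhS β0 (Submodule.mem_sup_right (Submodule.mem_span_singleton_self _))]
      simpa using hgβ0
    · simp only [LinearMap.add_apply, LinearMap.smul_apply, smul_eq_mul]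
      rw [hgz, hhS z (Submodule.mem_sup_left (cone_sub_span (cone_zero_face hg hz hgz)))]
      simp
  have h1 := hmax _ hP
  have h2 : n < Module.finrank ℝ (Submodule.span ℝ (Kf (g + t • h) : Set V)) := by
    rw [← hgn]
    apply Submodule.finrank_lt_finrank_of_lt
    have hle : Submodule.span ℝ (Kf g : Set V) ≤ Submodule.span ℝ (Kf (g + t • h) : Set V) := by
      apply Submodule.span_mono
      intro β hβ
      have hβ' : β ∈ I ∧ g β = 0 := Finset.mem_filter.1 hβ
      have : h β = 0 := hhS β (Submodule.mem_sup_left (Submodule.subset_span hβ))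
      simp [Kf, hβ'.1, hβ'.2, this]
    refine lt_of_le_of_ne hle fun e => ?_
    have hαm : α ∈ Submodule.span ℝ (Kf (g + t • h) : Set V) := by
      apply Submodule.subset_span
      have : g α + t * h α = 0 := by
        rw [ht]
        have := hα.2.ne
        field_simp
        ring
      simp [Kf, hα.1, this]
    rw [← e] at hαm
    have := hKspan g hαm
    rw [LinearMap.mem_ker] at this
    linarith
  omega

/-- Passing to absolute values of coefficients: a negative vector in the cone. -/
lemma exists_neg_in_cone {B : LinearMap.BilinForm ℝ V} {I : Finset V}
    (hoff : ∀ α ∈ I, ∀ β ∈ I, α ≠ β → B α β ≤ 0) {x : V}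
    (hx : x ∈ Submodule.span ℝ (I : Set V)) (hneg : B x x < 0) :
    ∃ c : V → ℝ, (∀ α ∈ I, 0 ≤ c α) ∧
      B (∑ α ∈ I, c α • α) (∑ α ∈ I, c α • α) < 0 := by
  obtain ⟨c, -, rfl⟩ := Submodule.mem_span_finset.1 hx
  refine ⟨fun α => |c α|, fun α _ => abs_nonneg _, lt_of_le_of_lt ?_ hneg⟩
  simp only [map_sum, map_smul, LinearMap.sum_apply, LinearMap.smul_apply, smul_eq_mul,
    Finset.mul_sum]
  refine Finset.sum_le_sum fun α hα => Finset.sum_le_sum fun β hβ => ?_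
  by_cases h : α = β
  · subst h
    rw [← mul_assoc, ← mul_assoc, abs_mul_abs_self]
  · have h1 := hoff α hα β hβ h
    have h2 := hoff β hβ α hα (Ne.symm h)
    rw [← mul_assoc, ← mul_assoc, ← abs_mul]
    exact mul_le_mul_of_nonpos_right (le_abs_self _) (by assumption)

/-- A negative vector of the cone lying in the negative of the dual cone. -/
lemma exists_neg_dual {B : LinearMap.BilinForm ℝ V} (hsymm : ∀ x y : V, B x y = B y x)
    {I : Finset V}
    (hoff : ∀ α ∈ I, ∀ β ∈ I, α ≠ β → B α β ≤ 0) {x : V}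
    (hx : x ∈ Submodule.span ℝ (I : Set V)) (hneg : B x x < 0) :
    ∃ v ∈ cone I, B v v < 0 ∧ ∀ β ∈ I, B v β ≤ 0 := by
  classical
  obtain ⟨c, hc, hcn⟩ := exists_neg_in_cone hoff hx hneg
  let L : (I → ℝ) → V := fun d => ∑ i : I, d i • (i : V)
  have hLc : L (fun i => c i) = ∑ α ∈ I, c α • α := by
    simp only [L]
    exact Finset.sum_coe_sort I (fun α => c α • α)
  have hcont : Continuous fun d : I → ℝ => B (L d) (L d) := by
    simp only [L, map_sum, map_smul, LinearMap.sum_apply, LinearMap.smul_apply, smul_eq_mul]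
    fun_prop
  have hLcone : ∀ d : I → ℝ, (∀ i, 0 ≤ d i) → L d ∈ cone I := by
    intro d hd
    refine ⟨fun a => if h : a ∈ I then d ⟨a, h⟩ else 0, ?_, ?_⟩
    · intro a ha; simp [ha, hd]
    · rw [← Finset.sum_coe_sort I]
      simp [L]
  set m := ∑ i : I, c i with hm
  have hmpos : 0 < m := by
    refine lt_of_le_of_ne (Finset.sum_nonneg fun i _ => hc i i.2) fun e => ?_
    have := (Finset.sum_eq_zero_iff_of_nonneg (fun (i : I) _ => hc i i.2)).1 e.symm
    have : ∑ α ∈ I, c α • α = 0 := by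
      rw [← hLc]
      exact Finset.sum_eq_zero fun i hi => by
        show c i • (i : V) = 0
        rw [this i hi, zero_smul]
    rw [this] at hcn
    simp at hcn
  have hd0 : (fun i : I => m⁻¹ * c i) ∈ stdSimplex ℝ I := by
    refine ⟨fun i => mul_nonneg (by positivity) (hc i i.2), ?_⟩
    rw [← Finset.mul_sum, ← hm, inv_mul_cancel₀ hmpos.ne']
  obtain ⟨d, hd, hdmin⟩ := (isCompact_stdSimplex ℝ I).exists_isMinOn ⟨_, hd0⟩ hcont.continuousOn
  have hq : B (L d) (L d) < 0 := by
    refine lt_of_le_of_lt (hdmin hd0) ?_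
    have : L (fun i : I => m⁻¹ * c i) = m⁻¹ • ∑ α ∈ I, c α • α := by
      rw [← hLc]
      simp [L, Finset.smul_sum, smul_smul]
    simp only [this, map_smul, LinearMap.smul_apply, smul_eq_mul]
    have : 0 < m⁻¹ := by positivity
    exact mul_neg_of_pos_of_neg this (mul_neg_of_pos_of_neg this hcn)
  refine ⟨L d, hLcone d hd.1, hq, ?_⟩
  intro β hβ
  rcases (hd.1 ⟨β, hβ⟩).eq_or_lt with h0 | hpos
  · -- coefficient zero
    simp only [L, map_sum, map_smul, LinearMap.sum_apply, LinearMap.smul_apply, smul_eq_mul]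
    refine Finset.sum_nonpos fun i _ => ?_
    by_cases hi : i = ⟨β, hβ⟩
    · rw [hi, ← h0, zero_mul]
    · exact mul_nonpos_of_nonneg_of_nonpos (hd.1 i)
        (hoff i i.2 β hβ fun e => hi (Subtype.ext e))
  · by_contra hcon
    push Not at hcon
    set a := d ⟨β, hβ⟩ with ha
    have ha1 : a ≤ 1 := by
      rw [← hd.2]
      exact Finset.single_le_sum (fun i _ => hd.1 i) (Finset.mem_univ _)
    set q := B (L d) (L d) with hqdef
    set p := B (L d) β with hp
    set r := B β β with hr
    -- move away from the vertex β by a small amount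
    have hvar : ∀ t : ℝ, 0 ≤ t → t ≤ a →
        q ≤ (1 + t) ^ 2 * q - 2 * t * (1 + t) * p + t ^ 2 * r := by
      intro t ht hta
      have hmem : (fun i : I => (1 + t) * d i - t * (if i = ⟨β, hβ⟩ then 1 else 0))
          ∈ stdSimplex ℝ I := by
        constructor
        · intro i
          have := hd.1 i
          by_cases hi : i = ⟨β, hβ⟩
          · simp only [hi, if_true]
            rw [← ha]
            nlinarith
          · simp only [hi, if_false]
            nlinarith
        · rw [Finset.sum_sub_distrib, ← Finset.mul_sum, hd.2, ← Finset.mul_sum]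
          simp
      have h1 := hdmin hmem
      have e : L (fun i : I => (1 + t) * d i - t * (if i = ⟨β, hβ⟩ then 1 else 0))
          = (1 + t) • L d - t • β := by
        simp only [L, sub_smul, Finset.sum_sub_distrib, mul_smul, ← Finset.smul_sum]
        congr 2
        simp [ite_smul]
      simp only [Set.mem_ofPred_eq] at h1
      rw [e] at h1
      simp only [map_sub, map_smul, LinearMap.sub_apply, LinearMap.smul_apply, smul_eq_mul] at h1
      rw [hsymm β (L d)] at h1
      rw [← hqdef, ← hp, ← hr] at h1
      linarith
    -- contradiction for small t
    have hr' : 0 < |r| + 1 := by positivity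
    obtain ⟨t, ht0, hta, htr⟩ : ∃ t : ℝ, 0 < t ∧ t ≤ a ∧ t * (|r| + 1) ≤ p :=
      ⟨min a (p / (|r| + 1)), lt_min hpos (by positivity), min_le_left _ _, by
        calc _ ≤ (p / (|r| + 1)) * (|r| + 1) := by gcongr; exact min_le_right _ _
          _ = p := by field_simp⟩
    have h1 := hvar t ht0.le hta
    have h2 : r ≤ |r| := le_abs_self r
    have h3 : t ^ 2 * r ≤ t * p := by
      have : t * r ≤ p := by nlinarith
      nlinarith
    nlinarith [mul_pos ht0 hcon, mul_pos (mul_pos ht0 ht0) hcon,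
      mul_pos ht0 (neg_pos.2 hq), mul_pos (mul_pos ht0 ht0) (neg_pos.2 hq)]


/-- The boundary condition supplied by level `2` for a facet. -/
lemma boundary_nonneg [FiniteDimensional ℝ V] {B : LinearMap.BilinForm ℝ V} {Δ I : Finset V}
    (hI : IsFacial Δ I 1) (hlev : LevelLE B Δ 2) {f : V →ₗ[ℝ] ℝ}
    (hf : ∀ β ∈ I, 0 ≤ f β) (hpos : ∃ β ∈ I, 0 < f β) {z : V} (hz : z ∈ cone I)
    (hfz : f z = 0) : 0 ≤ B z z := by
  obtain ⟨g, hg, hgz, K, hKI, hK, hzK, hrank⟩ := exists_facet hz hf hpos hfz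
  obtain ⟨hIΔ, ⟨hsub, hconv, hext⟩, hr⟩ := hI
  have hg0 : ∀ x ∈ cone K, g x = 0 := by
    rintro x ⟨c, hc, rfl⟩
    simp only [map_sum, map_smul, smul_eq_mul]
    exact Finset.sum_eq_zero fun i hi => by rw [(hK i (hKI hi)).1 hi, mul_zero]
  have hback : ∀ x ∈ cone I, g x = 0 → x ∈ cone K := by
    classical
    intro x hx h0
    have := cone_zero_face hg hx h0
    have e : (I.filter fun β => g β = 0) = K := by
      ext β
      rw [Finset.mem_filter]
      exact ⟨fun h => (hK β h.1).2 h.2, fun h => ⟨hKI h, (hK β (hKI h)).1 h⟩⟩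
    rwa [← e]
  refine hlev K ⟨hKI.trans hIΔ, ⟨cone_mono (hKI.trans hIΔ), ?_, ?_⟩, by omega⟩ z
    (cone_sub_span hzK)
  · intro x hx y hy a b ha hb _
    exact cone_add (cone_smul ha hx) (cone_smul hb hy)
  · intro x hx y hy t ht ht1 hxy
    obtain ⟨hxI, hyI⟩ := hext x hx y hy t ht ht1 (cone_mono hKI hxy)
    have h0 := hg0 _ hxy
    simp only [map_add, map_smul, smul_eq_mul] at h0
    have h1 := cone_nonneg hg hxI
    have h2 := cone_nonneg hg hyI
    have h3 : 0 < 1 - t := by linarith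
    have h4 := mul_nonneg ht.le h1
    have h5 := mul_nonneg h3.le h2
    have h6 : t * g x = 0 := by linarith
    have h7 : (1 - t) * g y = 0 := by linarith
    exact ⟨hback x hxI ((mul_eq_zero.1 h6).resolve_left ht.ne'),
      hback y hyI ((mul_eq_zero.1 h7).resolve_left (ne_of_gt h3))⟩

/-- In a level one situation, the dual cone is contained in the negative of the cone. -/
lemma dual_sub_neg_cone {B : LinearMap.BilinForm ℝ V} (hsymm : ∀ x y : V, B x y = B y x)
    {I : Finset V} (hoff : ∀ α ∈ I, ∀ β ∈ I, α ≠ β → B α β ≤ 0)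
    (hface : ∀ f : V →ₗ[ℝ] ℝ, (∀ β ∈ I, 0 ≤ f β) → (∃ β ∈ I, 0 < f β) →
      ∀ z ∈ cone I, f z = 0 → 0 ≤ B z z)
    (hneg : ∃ x ∈ Submodule.span ℝ (I : Set V), B x x < 0)
    (hnd : ∀ z ∈ Submodule.span ℝ (I : Set V), (∀ β ∈ I, B z β = 0) → z = 0)
    {x : V} (hx : x ∈ Submodule.span ℝ (I : Set V)) (hxI : ∀ β ∈ I, 0 ≤ B x β) :
    -x ∈ cone I := by
  by_contra hcon
  obtain ⟨x0, hx0, hx0n⟩ := hneg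
  obtain ⟨v, hv, hvn, hvI⟩ := exists_neg_dual hsymm hoff hx0 hx0n
  obtain ⟨t, ht, hzc, f, hf, hfp, hfz⟩ := exit_lemma hv hx hcon
  set z := v - t • x with hz
  have hzz := hface f hf hfp z hzc hfz
  have hzv : 0 ≤ -(B v z) := by
    have := cone_nonneg (f := -(B v)) (I := I) (fun β hβ => by simpa using hvI β hβ) hzc
    simpa using this
  have hzx : 0 ≤ B x z := cone_nonneg (f := B x) hxI hzc
  have hzz' : B z z = B v z - t * B x z := by
    simp only [hz, map_sub, map_smul, LinearMap.sub_apply, LinearMap.smul_apply, smul_eq_mul]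
    ring
  have hvz0 : B v z = 0 := by nlinarith
  have hzI : ∀ β ∈ I, 0 ≤ (-(B z)) β := by
    intro β hβ
    have h1 := hvI β hβ
    have h2 := mul_nonneg ht (hxI β hβ)
    simp only [hz, map_sub, map_smul, LinearMap.neg_apply, LinearMap.sub_apply,
      LinearMap.smul_apply, smul_eq_mul]
    linarith
  have hz0 : z = 0 := by
    refine hnd z (cone_sub_span hzc) fun β hβ => ?_
    by_contra hne
    have h1 := hzI β hβ
    have := hface (-(B z)) hzI ⟨β, hβ, lt_of_le_of_ne h1 (by
      intro e; apply hne; simpa using e.symm)⟩ v hv (by simp [hsymm z v, hvz0])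
    linarith
  have hvx : v = t • x := by
    rw [hz] at hz0
    exact sub_eq_zero.1 hz0
  have hxv : 0 ≤ B x v := cone_nonneg (f := B x) hxI hv
  have : B v v = t * B x v := by
    conv_lhs => rw [hvx]
    simp only [map_smul, LinearMap.smul_apply, smul_eq_mul]
    rw [hvx]
    simp
  have := mul_nonneg ht hxv
  linarith

lemma offdiag_nonpos {B : LinearMap.BilinForm ℝ V} {Δ : Finset V} (hΔ : IsRootBasis B Δ) :
    ∀ α ∈ Δ, ∀ β ∈ Δ, α ≠ β → B α β ≤ 0 := by
  intro α hα β hβ h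
  rcases hΔ.offdiag α hα β hβ h with h | ⟨k, hk, h⟩
  · linarith
  · rw [h]
    have hk' : (2 : ℝ) ≤ k := by exact_mod_cast hk
    have : 0 ≤ Real.cos (Real.pi / k) := by
      apply Real.cos_nonneg_of_neg_pi_div_two_le_of_le
      · have : 0 ≤ Real.pi / k := by positivity
        linarith [Real.pi_pos]
      · exact div_le_div_of_nonneg_left Real.pi_pos.le (by norm_num) hk'
    linarith

lemma weight_ne_zero {B : LinearMap.BilinForm ℝ V} {Δ I : Finset V} {ω : V}
    (h : IsWeight B Δ I ω) : ω ≠ 0 := by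
  rintro rfl
  obtain ⟨_, _, _, _, α, _, _, h⟩ := h
  simp at h

/-- The hyperplane orthogonal to a weight is the span of its facet. -/
lemma weight_perp [FiniteDimensional ℝ V] {B : LinearMap.BilinForm ℝ V}
    {Δ I : Finset V} {ω : V}
    (hsymm : ∀ x y : V, B x y = B y x) (h : IsWeight B Δ I ω) {x : V} :
    x ∈ Submodule.span ℝ (I : Set V) ↔ B ω x = 0 := by
  have hle : Submodule.span ℝ (I : Set V) ≤ LinearMap.ker (B ω) := by
    rw [Submodule.span_le]
    intro β hβ
    have := h.2.1 β hβ
    rw [hsymm] at this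
    exact this
  have hr := h.1.2.2
  have hne : LinearMap.ker (B ω) < ⊤ := by
    refine lt_top_iff_ne_top.2 fun e => ?_
    obtain ⟨_, _, _, _, α, _, _, h⟩ := h
    have : α ∈ LinearMap.ker (B ω) := e ▸ Submodule.mem_top
    rw [LinearMap.mem_ker, hsymm] at this
    linarith
  have := Submodule.finrank_lt hne.ne
  have e := Submodule.eq_of_le_of_finrank_le hle (by omega)
  rw [e, LinearMap.mem_ker]

/-- Facets on which the form is not positive semidefinite. -/
lemma nonpsd_facet [FiniteDimensional ℝ V] {B : LinearMap.BilinForm ℝ V}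
    (hsymm : ∀ x y : V, B x y = B y x) (hnd : B.Nondegenerate)
    {Δ : Finset V} (hΔ : IsRootBasis B Δ) (hlev : LevelLE B Δ 2)
    {I : Finset V} {ω : V} (h : IsWeight B Δ I ω)
    (hneg : ∃ x ∈ Submodule.span ℝ (I : Set V), B x x < 0) :
    0 < B ω ω ∧ ∀ α ∈ Δ, α ∉ I → ∃ α' ∈ cone I, B α' α' ≤ 0 ∧
      α = (B α ω / B ω ω) • ω + α' := by
  have hIΔ : I ⊆ Δ := h.1.1
  have hoff : ∀ α ∈ I, ∀ β ∈ I, α ≠ β → B α β ≤ 0 := fun α hα β hβ =>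
    offdiag_nonpos hΔ α (hIΔ hα) β (hIΔ hβ)
  have hface : ∀ f : V →ₗ[ℝ] ℝ, (∀ β ∈ I, 0 ≤ f β) → (∃ β ∈ I, 0 < f β) →
      ∀ z ∈ cone I, f z = 0 → 0 ≤ B z z := fun f hf hp z hz hfz =>
    boundary_nonneg h.1 hlev hf hp hz hfz
  have hωI : ∀ β ∈ I, B ω β = 0 := fun β hβ => by rw [hsymm]; exact h.2.1 β hβ
  have hω0 := weight_ne_zero h
  -- ω is not isotropic
  have hiso : B ω ω ≠ 0 := by
    intro h0
    have hωs : ω ∈ Submodule.span ℝ (I : Set V) := (weight_perp hsymm h).2 h0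
    obtain ⟨x0, hx0, hx0n⟩ := hneg
    obtain ⟨v, hv, hvn, -⟩ := exists_neg_dual hsymm hoff hx0 hx0n
    have hωv : B ω v = 0 := (weight_perp hsymm h).1 (cone_sub_span hv)
    have key : ∀ x : V, x ∈ Submodule.span ℝ (I : Set V) → B x x = 0 → B x v = 0 →
        -x ∈ cone I := by
      intro x hx hxx hxv
      by_contra hcon
      obtain ⟨t, ht, hzc, f, hf, hfp, hfz⟩ := exit_lemma hv hx hcon
      have := hface f hf hfp _ hzc hfz
      simp only [map_sub, map_smul, LinearMap.sub_apply, LinearMap.smul_apply,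
        smul_eq_mul, hxx, hxv, hsymm v x] at this
      linarith
    have h1 := key ω hωs h0 hωv
    have h2 := key (-ω) (neg_mem hωs) (by simp [h0]) (by simp [hωv])
    rw [neg_neg] at h2
    -- pointedness
    obtain ⟨c, hc, hc1⟩ := h1
    obtain ⟨d, hd, hd1⟩ := h2
    classical
    have hz := hΔ.posIndep (fun α => if α ∈ I then c α + d α else 0) (by
      intro α _
      by_cases hα : α ∈ I
      · simp only [hα, if_true]; exact add_nonneg (hc α hα) (hd α hα)
      · simp [hα]) (by
      have e : ∑ α ∈ Δ, (if α ∈ I then c α + d α else 0) • α = ∑ α ∈ I, (c α + d α) • α := by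
        rw [← Finset.sum_subset hIΔ]
        · exact Finset.sum_congr rfl fun α hα => by simp [hα]
        · intro α _ hα; simp [hα]
      rw [e]
      simp only [add_smul, Finset.sum_add_distrib]
      rw [← hc1, ← hd1]; simp)
    apply hω0
    rw [hd1]
    refine Finset.sum_eq_zero fun α hα => ?_
    have := hz α (hIΔ hα)
    simp only [hα, if_true] at this
    have h3 := hc α hα
    have h4 := hd α hα
    have : d α = 0 := by linarith
    rw [this, zero_smul]
  have hndI : ∀ z ∈ Submodule.span ℝ (I : Set V), (∀ β ∈ I, B z β = 0) → z = 0 := by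
    intro z hz hzI
    refine hnd.1 z fun y => ?_
    have hsp : ∀ y ∈ Submodule.span ℝ (I : Set V), B z y = 0 := by
      intro y hy
      have : Submodule.span ℝ (I : Set V) ≤ LinearMap.ker (B z) :=
        Submodule.span_le.2 fun β hβ => hzI β hβ
      exact this hy
    have hy : y - (B ω y / B ω ω) • ω ∈ Submodule.span ℝ (I : Set V) := by
      rw [weight_perp hsymm h]
      simp only [map_sub, map_smul, smul_eq_mul]
      field_simp
      ring
    have h1 := hsp _ hy
    simp only [map_sub, map_smul, smul_eq_mul] at h1
    have h2 : B z ω = 0 := by rw [hsymm]; exact (weight_perp hsymm h).1 hz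
    rw [h2] at h1
    linarith
  have hdec : ∀ α ∈ Δ, α ∉ I → ∃ α' ∈ cone I, B α' α' ≤ 0 ∧ B ω α' = 0 ∧
      α = (B α ω / B ω ω) • ω + α' := by
    intro α hα hαI
    set α' := α - (B α ω / B ω ω) • ω with hα'
    have hperp : B ω α' = 0 := by
      simp only [hα', map_sub, map_smul, smul_eq_mul, hsymm α ω]
      field_simp
      ring
    have hsp : α' ∈ Submodule.span ℝ (I : Set V) := (weight_perp hsymm h).2 hperp
    have hle : ∀ β ∈ I, B α' β ≤ 0 := by
      intro β hβ
      simp only [hα', map_sub, map_smul, LinearMap.sub_apply, LinearMap.smul_apply, smul_eq_mul,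
        hωI β hβ]
      have := offdiag_nonpos hΔ α hα β (hIΔ hβ) (fun e => hαI (e ▸ hβ))
      linarith
    have hc := dual_sub_neg_cone hsymm hoff hface hneg hndI (x := -α') (neg_mem hsp)
      (fun β hβ => by simpa using hle β hβ)
    rw [neg_neg] at hc
    refine ⟨α', hc, ?_, hperp, by rw [hα']; abel⟩
    have := cone_nonneg (f := -(B α')) (fun β hβ => by simpa using hle β hβ) hc
    simpa using this
  refine ⟨?_, fun α hα hαI => ?_⟩
  · rcases lt_or_gt_of_ne hiso with hlt | hgt
    · exfalso
      obtain ⟨α, hα, hαI, hαω⟩ := h.2.2.2.2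
      obtain ⟨α', _, h1, h2, h3⟩ := hdec α hα hαI
      have hu := hΔ.unit α hα
      rw [hαω] at h3
      have h2' : B α' ω = 0 := by rw [hsymm]; exact h2
      rw [h3] at hu
      simp only [map_add, map_smul, LinearMap.add_apply, LinearMap.smul_apply, smul_eq_mul,
        h2, h2'] at hu
      field_simp at hu
      nlinarith
    · exact hgt
  · obtain ⟨α', h0, h1, _, h3⟩ := hdec α hα hαI
    exact ⟨α', h0, h1, h3⟩


/-- Distinct weights have incomparable facets. -/
lemma exists_mem_not_mem [FiniteDimensional ℝ V] {B : LinearMap.BilinForm ℝ V}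
    (hsymm : ∀ x y : V, B x y = B y x) (hnd : B.Nondegenerate)
    {Δ I J : Finset V} {ω ω' : V} (hI : IsWeight B Δ I ω) (hJ : IsWeight B Δ J ω')
    (hne : ω ≠ ω') : ∃ α ∈ J, α ∉ I := by
  by_contra hcon
  push Not at hcon
  have hJI : J ⊆ I := hcon
  have hspan : Submodule.span ℝ (J : Set V) = Submodule.span ℝ (I : Set V) := by
    apply Submodule.eq_of_le_of_finrank_eq (Submodule.span_mono (by exact_mod_cast hJI))
    have h1 := hI.1.2.2
    have h2 := hJ.1.2.2
    omega
  have hperp : ∀ x, B ω x = 0 ↔ B ω' x = 0 := fun x => by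
    rw [← weight_perp hsymm hI, ← weight_perp hsymm hJ, hspan]
  have hIJ : ∀ α ∈ Δ, α ∈ I ↔ α ∈ J := by
    intro α hα
    refine ⟨fun h => ?_, fun h => hJI h⟩
    by_contra hαJ
    have h1 := hJ.2.2.1 α hα hαJ
    have h2 := hI.2.1 α h
    rw [hsymm, hperp, hsymm] at h2
    linarith
  obtain ⟨α, hα, hαI, hαω⟩ := hI.2.2.2.2
  obtain ⟨β, hβ, hβJ, hβω⟩ := hJ.2.2.2.2
  have hprop : ∀ x, B ω' x = B ω' α * B ω x := by
    intro x
    have : B ω (x - B ω x • α) = 0 := by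
      simp only [map_sub, map_smul, smul_eq_mul]
      rw [hsymm ω α, hαω]; ring
    rw [hperp] at this
    simp only [map_sub, map_smul, smul_eq_mul] at this
    linarith
  have h1 : 1 ≤ B ω' α := by
    rw [hsymm]; exact hJ.2.2.2.1 α hα (fun h => hαI ((hIJ α hα).2 h))
  have h2 : 1 ≤ B ω β := by
    rw [hsymm]; exact hI.2.2.2.1 β hβ (fun h => hβJ ((hIJ β hβ).1 h))
  have h3 := hprop β
  rw [hsymm ω' β, hβω] at h3
  have h4 : B ω' α = 1 := by nlinarith
  apply hne
  rw [← sub_eq_zero]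
  refine hnd.1 _ fun x => ?_
  have := hprop x
  simp only [map_sub, LinearMap.sub_apply]
  rw [this, h4]; ring

/-- A facet with positive semidefinite span, in an indefinite space, has a
non-spacelike weight. -/
lemma psd_facet [FiniteDimensional ℝ V] {B : LinearMap.BilinForm ℝ V}
    (hsymm : ∀ x y : V, B x y = B y x) {Δ I : Finset V} {ω : V} (hI : IsWeight B Δ I ω)
    (hpsd : ∀ x ∈ Submodule.span ℝ (I : Set V), 0 ≤ B x x)
    (hneg : ∃ x, B x x < 0) : B ω ω ≤ 0 := by
  by_contra hcon
  push Not at hcon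
  obtain ⟨x, hx⟩ := hneg
  have h1 : B ω (B ω ω • x - B ω x • ω) = 0 := by
    simp only [map_sub, map_smul, smul_eq_mul]; ring
  have h2 := hpsd _ ((weight_perp hsymm hI).2 h1)
  simp only [map_sub, map_smul, LinearMap.sub_apply, LinearMap.smul_apply, smul_eq_mul,
    hsymm x ω] at h2
  have h3 : B ω ω * (B ω ω * B x x) < 0 :=
    mul_neg_of_pos_of_neg hcon (mul_neg_of_pos_of_neg hcon hx)
  have h4 : 0 ≤ B ω ω * (B ω x) ^ 2 := by positivity
  nlinarith

lemma weights_pair_nonpos [FiniteDimensional ℝ V] {B : LinearMap.BilinForm ℝ V}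
    (hsymm : ∀ x y : V, B x y = B y x) (hnd : B.Nondegenerate)
    {Δ : Finset V} (hΔ : IsRootBasis B Δ)
    (hlev : LevelLE B Δ 1 ∨ LevelLE B Δ 2) (hneg : ∃ x, B x x < 0)
    {I J : Finset V} {ω ω' : V} (hI : IsWeight B Δ I ω) (hJ : IsWeight B Δ J ω')
    (hne : ω ≠ ω') : B ω ω' ≤ 0 := by
  have main : ∀ {I J : Finset V} {ω ω' : V}, IsWeight B Δ I ω → IsWeight B Δ J ω' →
      ω ≠ ω' → (∃ x ∈ Submodule.span ℝ (I : Set V), B x x < 0) → B ω ω' ≤ 0 := by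
    intro I J ω ω' hI hJ hne hx
    have hlev2 : LevelLE B Δ 2 := by
      rcases hlev with h | h
      · obtain ⟨x, hx, hxn⟩ := hx
        have := h I hI.1 x hx
        linarith
      · exact h
    obtain ⟨hpos, hdec⟩ := nonpsd_facet hsymm hnd hΔ hlev2 hI hx
    obtain ⟨α, hαJ, hαI⟩ := exists_mem_not_mem hsymm hnd hI hJ hne
    have hαΔ := hJ.1.1 hαJ
    obtain ⟨α', hα', _, hα⟩ := hdec α hαΔ hαI
    have h1 : B ω' α = 0 := by rw [hsymm]; exact hJ.2.1 α hαJ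
    have h2 : 0 ≤ B ω' α' := by
      refine cone_nonneg (f := B ω') (I := I) (fun β hβ => ?_) hα'
      rw [hsymm]
      by_cases hβJ : β ∈ J
      · exact (hJ.2.1 β hβJ).ge
      · exact (hJ.2.2.1 β (hI.1.1 hβ) hβJ).le
    have h3 : 0 < B α ω / B ω ω := div_pos (hI.2.2.1 α hαΔ hαI) hpos
    rw [hα] at h1
    generalize B α ω / B ω ω = r at h1 h3
    simp only [map_add, map_smul, smul_eq_mul] at h1
    rw [hsymm]
    by_contra hcon
    push Not at hcon
    have := mul_pos h3 hcon
    linarith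
  by_cases h1 : ∃ x ∈ Submodule.span ℝ (I : Set V), B x x < 0
  · exact main hI hJ hne h1
  by_cases h2 : ∃ x ∈ Submodule.span ℝ (J : Set V), B x x < 0
  · rw [hsymm]; exact main hJ hI hne.symm h2
  push Not at h1 h2
  by_contra hcon
  push Not at hcon
  have hω' := psd_facet hsymm hJ h2 hneg
  obtain ⟨x, hx⟩ := hneg
  obtain ⟨c, hc, hcn⟩ := exists_neg_in_cone (offdiag_nonpos hΔ)
    (x := x) (by rw [hΔ.spans]; exact Submodule.mem_top) hx
  set v := ∑ α ∈ Δ, c α • α with hv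
  have hvc : v ∈ cone Δ := ⟨c, hc, hv⟩
  have hdual : ∀ {K : Finset V} {η : V}, IsWeight B Δ K η → 0 ≤ B η v := by
    intro K η hK
    refine cone_nonneg (f := B η) (I := Δ) (fun β hβ => ?_) hvc
    rw [hsymm]
    by_cases hβJ : β ∈ K
    · exact (hK.2.1 β hβJ).ge
    · exact (hK.2.2.1 β hβ hβJ).le
  have hp := hdual hI
  have hq := hdual hJ
  have h3 : B ω (B ω ω' • v - B ω v • ω') = 0 := by
    simp only [map_sub, map_smul, smul_eq_mul]; ring
  have h4 := h1 _ ((weight_perp hsymm hI).2 h3)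
  simp only [map_sub, map_smul, LinearMap.sub_apply, LinearMap.smul_apply, smul_eq_mul,
    hsymm v ω'] at h4
  have h5 : B ω ω' * (B ω ω' * B v v) < 0 :=
    mul_neg_of_pos_of_neg hcon (mul_neg_of_pos_of_neg hcon hcn)
  have h6 : 0 ≤ B ω ω' * (B ω v * B ω' v) := by positivity
  have h7 : B ω v * (B ω v * B ω' ω') ≤ 0 :=
    mul_nonpos_of_nonneg_of_nonpos hp (mul_nonpos_of_nonneg_of_nonpos hp hω')
  nlinarith

lemma weight_self_le [FiniteDimensional ℝ V] {B : LinearMap.BilinForm ℝ V}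
    (hsymm : ∀ x y : V, B x y = B y x) (hnd : B.Nondegenerate)
    {Δ : Finset V} (hΔ : IsRootBasis B Δ)
    (hlev : LevelLE B Δ 1 ∨ LevelLE B Δ 2) (hneg : ∃ x, B x x < 0)
    {I : Finset V} {ω : V} (hI : IsWeight B Δ I ω) : B ω ω ≤ 1 := by
  by_cases h1 : ∃ x ∈ Submodule.span ℝ (I : Set V), B x x < 0
  · have hlev2 : LevelLE B Δ 2 := by
      rcases hlev with h | h
      · obtain ⟨x, hx, hxn⟩ := h1
        have := h I hI.1 x hx
        linarith
      · exact h
    obtain ⟨hpos, hdec⟩ := nonpsd_facet hsymm hnd hΔ hlev2 hI h1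
    obtain ⟨α, hα, hαI, hαω⟩ := hI.2.2.2.2
    obtain ⟨α', hα', hn, e⟩ := hdec α hα hαI
    have hu := hΔ.unit α hα
    have hperp : B ω α' = 0 := (weight_perp hsymm hI).1 (cone_sub_span hα')
    have hperp' : B α' ω = 0 := by rw [hsymm]; exact hperp
    rw [hαω] at e
    rw [e] at hu
    simp only [map_add, map_smul, LinearMap.add_apply, LinearMap.smul_apply, smul_eq_mul,
      hperp, hperp'] at hu
    field_simp at hu
    nlinarith
  · push Not at h1
    have := psd_facet hsymm hI h1 hneg
    linarith


/-! ### Simple reflections and length -/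

lemma reflection_app (B : LinearMap.BilinForm ℝ V) (α x : V) :
    reflection B α x = x - (2 * B α x) • α := by
  simp only [reflection, LinearMap.sub_apply, LinearMap.id_apply, LinearMap.smulRight_apply,
    smul_smul]
  rw [mul_comm]

lemma reflection_invol {B : LinearMap.BilinForm ℝ V} {α : V} (h : B α α = 1) :
    Function.Involutive (reflection B α) := by
  intro x
  rw [reflection_app, reflection_app]
  simp only [map_sub, map_smul, smul_eq_mul, h]
  module

open Classical in
/-- The reflection as a linear automorphism. -/
noncomputable def sref (B : LinearMap.BilinForm ℝ V) (α : V) : V ≃ₗ[ℝ] V :=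
  if h : B α α = 1 then LinearEquiv.ofInvolutive (reflection B α) (reflection_invol h) else 1

lemma sref_coe {B : LinearMap.BilinForm ℝ V} {α : V} (h : B α α = 1) :
    (sref B α : V →ₗ[ℝ] V) = reflection B α := by
  ext x
  simp [sref, h]

lemma sref_app {B : LinearMap.BilinForm ℝ V} {α : V} (h : B α α = 1) (x : V) :
    sref B α x = x - (2 * B α x) • α := by
  rw [← reflection_app, ← sref_coe h]; rfl

lemma lin_one_app (x : V) : (1 : V ≃ₗ[ℝ] V) x = x := rfl

lemma sref_mul {B : LinearMap.BilinForm ℝ V} {α : V} (h : B α α = 1) :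
    sref B α * sref B α = 1 := by
  ext x
  simp only [LinearEquiv.mul_apply, sref_app h, map_sub, map_smul, smul_eq_mul, h,
    lin_one_app]
  module

lemma sref_inv {B : LinearMap.BilinForm ℝ V} {α : V} (h : B α α = 1) :
    (sref B α)⁻¹ = sref B α := inv_eq_of_mul_eq_one_left (sref_mul h)

/-- The set of simple reflections. -/
def gens (B : LinearMap.BilinForm ℝ V) (Δ : Finset V) : Set (V ≃ₗ[ℝ] V) :=
  sref B '' (Δ : Set V)

lemma weylGroup_eq {B : LinearMap.BilinForm ℝ V} {Δ : Finset V} (hΔ : IsRootBasis B Δ) :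
    weylGroup B Δ = Subgroup.closure (gens B Δ) := by
  unfold weylGroup
  congr 1
  ext g
  constructor
  · rintro ⟨α, hα, hg⟩
    refine ⟨α, hα, ?_⟩
    apply LinearEquiv.toLinearMap_injective
    rw [hg, sref_coe (hΔ.unit α hα)]
  · rintro ⟨α, hα, rfl⟩
    exact ⟨α, hα, sref_coe (hΔ.unit α hα)⟩

open scoped Pointwise in
/-- `g` is a product of `n` elements of `S`. -/
def IsWord {G : Type*} [Group G] (S : Set G) (n : ℕ) (g : G) : Prop := g ∈ S ^ n

section words
variable {G : Type*} [Group G] {S : Set G}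

open scoped Pointwise in
lemma isWord_zero {g : G} : IsWord S 0 g ↔ g = 1 := by simp [IsWord]

open scoped Pointwise in
lemma isWord_one {g : G} : IsWord S 1 g ↔ g ∈ S := by simp [IsWord]

open scoped Pointwise in
lemma IsWord.mul {m n : ℕ} {g h : G} (hg : IsWord S m g) (hh : IsWord S n h) :
    IsWord S (m + n) (g * h) := by
  unfold IsWord
  rw [pow_add]
  exact Set.mul_mem_mul hg hh

open scoped Pointwise in
lemma IsWord.split {n : ℕ} {g : G} (hg : IsWord S (n + 1) g) :
    ∃ h, IsWord S n h ∧ ∃ s ∈ S, g = h * s := by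
  unfold IsWord at hg
  rw [pow_succ] at hg
  obtain ⟨h, hh, s, hs, e⟩ := hg
  exact ⟨h, hh, s, hs, e.symm⟩

lemma IsWord.inv (hS : ∀ s ∈ S, s⁻¹ ∈ S) {n : ℕ} : ∀ {g : G}, IsWord S n g → IsWord S n g⁻¹ := by
  induction n with
  | zero => intro g hg; rw [isWord_zero] at *; simp [hg]
  | succ n ih =>
    intro g hg
    obtain ⟨h, hh, s, hs, rfl⟩ := hg.split
    rw [mul_inv_rev, add_comm]
    exact (isWord_one.2 (hS s hs)).mul (ih hh)

lemma IsWord.mem {n : ℕ} : ∀ {g : G}, IsWord S n g → g ∈ Subgroup.closure S := by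
  induction n with
  | zero => intro g hg; rw [isWord_zero] at hg; rw [hg]; exact one_mem _
  | succ n ih =>
    intro g hg
    obtain ⟨h, hh, s, hs, rfl⟩ := hg.split
    exact mul_mem (ih hh) (Subgroup.subset_closure hs)

lemma exists_word (hS : ∀ s ∈ S, s⁻¹ ∈ S) {g : G} (hg : g ∈ Subgroup.closure S) :
    ∃ n, IsWord S n g := by
  induction hg using Subgroup.closure_induction with
  | mem x hx => exact ⟨1, isWord_one.2 hx⟩
  | one => exact ⟨0, isWord_zero.2 rfl⟩
  | mul x y _ _ hx hy =>
    obtain ⟨m, hm⟩ := hx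
    obtain ⟨n, hn⟩ := hy
    exact ⟨_, hm.mul hn⟩
  | inv x _ hx =>
    obtain ⟨m, hm⟩ := hx
    exact ⟨m, hm.inv hS⟩

/-- Word length. -/
noncomputable def len (S : Set G) (g : G) : ℕ := sInf {n | IsWord S n g}

lemma IsWord.len_le {n : ℕ} {g : G} (h : IsWord S n g) : len S g ≤ n := Nat.sInf_le h

lemma len_word (hS : ∀ s ∈ S, s⁻¹ ∈ S) {g : G} (hg : g ∈ Subgroup.closure S) :
    IsWord S (len S g) g := Nat.sInf_mem (s := {n | IsWord S n g}) (exists_word hS hg)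

/-- Alternating product of length `k` ending in `t`. -/
def alt : ℕ → G → G → G
  | 0, _, _ => 1
  | k + 1, s, t => alt k t s * t

/-- First letter of the alternating word of length `k+1`. -/
def first {G : Type*} (k : ℕ) (s t : G) : G := if Even k then t else s

lemma first_swap {G : Type*} (k : ℕ) (s t : G) : first k t s = first (k + 1) s t := by
  unfold first
  by_cases h : Even k <;> simp [h, Nat.even_add_one]

lemma alt_left (k : ℕ) : ∀ s t : G, alt (k + 1) s t = first k s t * alt k s t := by
  induction k with
  | zero => intro s t; simp [alt, first]
  | succ k ih =>
    intro s t
    rw [alt, ih t s, mul_assoc, first_swap]; rfl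

lemma alt_word {s t : G} (hs : s ∈ S) (ht : t ∈ S) (k : ℕ) : IsWord S k (alt k s t) := by
  induction k generalizing s t with
  | zero => exact isWord_zero.2 rfl
  | succ k ih => exact (ih ht hs).mul (isWord_one.2 ht)

lemma alt_split {s t : G} (hs : s ∈ S) (ht : t ∈ S) (j i : ℕ) :
    ∃ x, IsWord S i x ∧ alt (j + i) s t = x * alt j s t := by
  induction i with
  | zero => exact ⟨1, isWord_zero.2 rfl, by simp⟩
  | succ i ih =>
    obtain ⟨x, hx, e⟩ := ih
    refine ⟨first (j + i) s t * x, ?_, ?_⟩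
    · rw [add_comm]
      refine (isWord_one.2 ?_).mul hx
      unfold first; split_ifs <;> assumption
    · rw [← add_assoc, alt_left, e, mul_assoc]

lemma alt_short (hS : ∀ s ∈ S, s⁻¹ ∈ S) {s t : G} (hs : s ∈ S) (ht : t ∈ S) {m : ℕ} (hm : 1 ≤ m)
    (h1 : alt (2 * m) t s = 1) {k : ℕ} (hk : m ≤ k) :
    ∃ n, n + 1 ≤ k ∧ IsWord S n (alt k s t * s) := by
  obtain ⟨y, hy, e⟩ := alt_split ht hs (m + 1) (m - 1)
  obtain ⟨x, hx, e'⟩ := alt_split ht hs (m + 1) (k - m)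
  have h2 : m + 1 + (m - 1) = 2 * m := by omega
  have h3 : m + 1 + (k - m) = k + 1 := by omega
  rw [h2, h1] at e
  rw [h3] at e'
  have e2 : alt (m + 1) t s = y⁻¹ := (eq_inv_of_mul_eq_one_right e.symm)
  refine ⟨k - m + (m - 1), by omega, ?_⟩
  change IsWord S _ (alt (k + 1) t s)
  rw [e', e2]
  exact hx.mul (hy.inv hS)

end words

/-! ### Dihedral computations -/

/-- Coefficients of the roots of a dihedral subgroup. -/
def useq (c : ℝ) : ℕ → ℝ
  | 0 => 0
  | 1 => 1
  | n + 2 => c * useq c (n + 1) - useq c n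

lemma useq_sin {θ : ℝ} (hθ : Real.sin θ ≠ 0) (n : ℕ) :
    useq (2 * Real.cos θ) n = Real.sin (n * θ) / Real.sin θ ∧
    useq (2 * Real.cos θ) (n + 1) = Real.sin ((n + 1) * θ) / Real.sin θ := by
  induction n with
  | zero => simp [useq, hθ]
  | succ n ih =>
    refine ⟨by push_cast; exact ih.2, ?_⟩
    rw [useq, ih.1, ih.2]
    have h1 : ((((n + 1 : ℕ) : ℝ)) + 1) * θ = (n + 1) * θ + θ := by push_cast; ring
    have h2 : (n : ℝ) * θ = (n + 1) * θ - θ := by ring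
    rw [h1, h2, Real.sin_add, Real.sin_sub]
    field_simp
    ring

lemma useq_nonneg {c : ℝ} (hc : 2 ≤ c) (n : ℕ) :
    0 ≤ useq c n ∧ useq c n ≤ useq c (n + 1) := by
  induction n with
  | zero => simp [useq]
  | succ n ih =>
    refine ⟨ih.1.trans ih.2, ?_⟩
    rw [useq]
    nlinarith [ih.1, ih.2]

lemma alt_apply {B : LinearMap.BilinForm ℝ V} (hsymm : ∀ x y : V, B x y = B y x) {α β : V}
    (hα : B α α = 1) (hβ : B β β = 1) (k : ℕ) :
    alt k (sref B α) (sref B β) α =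
      if Even k then useq (-2 * B α β) (k + 1) • α + useq (-2 * B α β) k • β
      else useq (-2 * B α β) k • α + useq (-2 * B α β) (k + 1) • β := by
  induction k with
  | zero => simp [alt, useq]
  | succ k ih =>
    rw [alt_left, LinearEquiv.mul_apply, ih]
    by_cases h : Even k
    · simp only [h, if_true, first, Nat.even_add_one, not_true, if_false]
      rw [sref_app hβ]
      simp only [map_add, map_smul, smul_eq_mul, hβ, hsymm β α, useq]
      module
    · simp only [h, if_true, first, Nat.even_add_one, not_false_eq_true, if_false]
      rw [sref_app hα]
      simp only [map_add, map_smul, smul_eq_mul, hα, useq]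
      module

lemma alt_perp {B : LinearMap.BilinForm ℝ V} {α β x : V}
    (hα : B α α = 1) (hβ : B β β = 1) (h1 : B α x = 0) (h2 : B β x = 0) (k : ℕ) :
    alt k (sref B α) (sref B β) x = x := by
  induction k with
  | zero => simp [alt]
  | succ k ih =>
    rw [alt_left, LinearEquiv.mul_apply, ih]
    unfold first
    split_ifs
    · simp [sref_app hβ, h2]
    · simp [sref_app hα, h1]

lemma sin_pi_div_pos {m : ℕ} (hm : 2 ≤ m) : 0 < Real.sin (Real.pi / m) := by
  have hm' : (2 : ℝ) ≤ m := by exact_mod_cast hm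
  apply Real.sin_pos_of_pos_of_lt_pi
  · have := Real.pi_pos
    positivity
  · rw [div_lt_iff₀ (by linarith)]
    nlinarith [Real.pi_pos]

lemma alt_order {B : LinearMap.BilinForm ℝ V} (hsymm : ∀ x y : V, B x y = B y x) {α β : V}
    (hα : B α α = 1) (hβ : B β β = 1) {m : ℕ} (hm : 2 ≤ m)
    (hb : B α β = -Real.cos (Real.pi / m)) :
    alt (2 * m) (sref B α) (sref B β) = 1 := by
  have hs := sin_pi_div_pos hm
  have hm0 : (m : ℝ) ≠ 0 := by positivity
  set θ := Real.pi / m with hθ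
  have hmθ : (m : ℝ) * θ = Real.pi := by rw [hθ]; field_simp
  have hc : -2 * B α β = 2 * Real.cos θ := by rw [hb]; ring
  have u0 : useq (-2 * B α β) (2 * m) = 0 := by
    rw [hc, (useq_sin hs.ne' _).1]
    push_cast
    rw [mul_assoc, hmθ]; simp
  have u1 : useq (-2 * B α β) (2 * m + 1) = 1 := by
    rw [hc, (useq_sin hs.ne' _).2]
    push_cast
    rw [show (2 * (m : ℝ) + 1) * θ = θ + 2 * Real.pi by rw [← hmθ]; ring, Real.sin_add_two_pi,
      div_self hs.ne']
  have u2 : useq (-2 * B α β) (2 * m - 1) = -1 := by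
    rw [hc, (useq_sin hs.ne' _).1]
    rw [Nat.cast_sub (by omega)]
    push_cast
    rw [show (2 * (m : ℝ) - 1) * θ = -θ + 2 * Real.pi by rw [← hmθ]; ring, Real.sin_add_two_pi,
      Real.sin_neg, neg_div, div_self hs.ne']
  have ea : alt (2 * m) (sref B α) (sref B β) α = α := by
    rw [alt_apply hsymm hα hβ, if_pos (by simp), u0, u1]; simp
  have eb : alt (2 * m) (sref B α) (sref B β) β = β := by
    obtain ⟨p, hp⟩ : ∃ p, 2 * m = p + 1 := ⟨2 * m - 1, by omega⟩
    have hpo : ¬ Even p := by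
      intro hev
      have : Even (2 * m) := by simp
      rw [hp, Nat.even_add_one] at this
      exact this hev
    have hp1 : 2 * m - 1 = p := by omega
    rw [hp1] at u2
    rw [hp] at u0 ⊢
    rw [alt, LinearEquiv.mul_apply, sref_app hβ, hβ,
      show β - (2 * (1 : ℝ)) • β = -β by module, map_neg, alt_apply hsymm hβ hα, if_neg hpo,
      hsymm β α, u0, u2]
    simp
  ext x
  simp only [lin_one_app]
  set b := B α β with hbdef
  have hdet : 1 - b ^ 2 ≠ 0 := by
    rw [hb]
    have := Real.sin_sq_add_cos_sq θ
    have h2 : 1 - (-Real.cos θ) ^ 2 = Real.sin θ ^ 2 := by nlinarith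
    rw [h2]; positivity
  set c1 := (B α x - b * B β x) / (1 - b ^ 2) with hc1
  set c2 := (B β x - b * B α x) / (1 - b ^ 2) with hc2
  have hx : x = c1 • α + c2 • β + (x - c1 • α - c2 • β) := by module
  have hp := alt_perp (B := B) (x := x - c1 • α - c2 • β) hα hβ (by
      simp only [map_sub, map_smul, smul_eq_mul, hα, ← hbdef, hc1, hc2]
      field_simp; ring) (by
      simp only [map_sub, map_smul, smul_eq_mul, hβ, hsymm β α, ← hbdef, hc1, hc2]
      field_simp; ring) (2 * m)
  conv_lhs => rw [hx]
  rw [map_add, map_add, map_smul, map_smul, ea, eb, hp]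
  module

lemma gens_inv {B : LinearMap.BilinForm ℝ V} {Δ : Finset V} (hΔ : IsRootBasis B Δ) :
    ∀ s ∈ gens B Δ, s⁻¹ ∈ gens B Δ := by
  rintro s ⟨α, hα, rfl⟩
  rw [sref_inv (hΔ.unit α hα)]
  exact ⟨α, hα, rfl⟩

/-- If `w s_α` is not shorter than `w` then `w α` is positive. -/
theorem pos_of_len {B : LinearMap.BilinForm ℝ V} (hsymm : ∀ x y : V, B x y = B y x)
    {Δ : Finset V} (hΔ : IsRootBasis B Δ) (n : ℕ) :
    ∀ w ∈ Subgroup.closure (gens B Δ), len (gens B Δ) w = n → ∀ α ∈ Δ,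
      len (gens B Δ) w ≤ len (gens B Δ) (w * sref B α) → w α ∈ cone Δ := by
  induction n using Nat.strong_induction_on with
  | _ n ih =>
  intro w hw hn α hα hlen
  have hS := gens_inv hΔ
  set S := gens B Δ with hSdef
  have hsS : ∀ γ ∈ Δ, sref B γ ∈ S := fun γ hγ => ⟨γ, hγ, rfl⟩
  have hww := len_word hS hw
  rcases Nat.eq_zero_or_pos n with h0 | hpos
  · rw [hn, h0, isWord_zero] at hww
    rw [hww]
    exact cone_of_mem hα
  obtain ⟨p, rfl⟩ : ∃ p, n = p + 1 := ⟨n - 1, by omega⟩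
  rw [hn] at hww
  obtain ⟨w1, hw1, t, ⟨β, hβ, rfl⟩, hwt⟩ := hww.split
  have hα1 := hΔ.unit α hα
  have hβ1 := hΔ.unit β hβ
  set s := sref B α with hs
  set t := sref B β with ht
  have hss : s * s = 1 := sref_mul hα1
  have htt : t * t = 1 := sref_mul hβ1
  have hαβ : α ≠ β := by
    intro e
    have : w * s = w1 := by rw [hwt, hs, e, mul_assoc, htt, mul_one]
    rw [this] at hlen
    have := hw1.len_le
    omega
  have hfS : ∀ k, first k s t ∈ S := by
    intro k; unfold first; split_ifs
    · exact hsS β hβ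
    · exact hsS α hα
  have hff : ∀ k, first k s t * first k s t = 1 := by
    intro k; unfold first; split_ifs <;> assumption
  have hlm : ∀ v ∈ Subgroup.closure S, ∀ k, len S (v * alt k s t) ≤ len S v + k := fun v hv k =>
    ((len_word hS hv).mul (alt_word (hsS α hα) (hsS β hβ) k)).len_le
  obtain ⟨k, hk1, ⟨v, hv, hwv, hlv⟩, hmax⟩ : ∃ k, 1 ≤ k ∧
      (∃ v ∈ Subgroup.closure S, w = v * alt k s t ∧ len S v + k = p + 1) ∧
      ¬ (∃ v ∈ Subgroup.closure S, w = v * alt (k + 1) s t ∧ len S v + (k + 1) = p + 1) := by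
    by_contra hcon
    push Not at hcon
    have hall : ∀ k, ∃ v ∈ Subgroup.closure S, w = v * alt (k + 1) s t ∧
        len S v + (k + 1) = p + 1 := by
      intro k
      induction k with
      | zero =>
        refine ⟨w1, hw1.mem, by simpa [alt] using hwt, ?_⟩
        have h1 := hw1.len_le
        have h2 := hlm w1 hw1.mem 1
        simp only [alt, one_mul] at h2
        rw [← hwt] at h2
        omega
      | succ k ih' =>
        obtain ⟨v, hv, h1, h2⟩ := ih'
        by_contra hc
        exact hcon (k + 1) (by omega) ⟨v, hv, h1, h2⟩ |> fun h => hc (by simpa using h)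
    obtain ⟨v, _, _, h⟩ := hall (p + 1)
    omega
  obtain ⟨j, rfl⟩ : ∃ j, k = j + 1 := ⟨k - 1, by omega⟩
  have hmem : ∀ i, v * first i s t ∈ Subgroup.closure S := fun i =>
    mul_mem hv (Subgroup.subset_closure (hfS i))
  have hA : len S v ≤ len S (v * first j s t) := by
    by_contra hc
    push Not at hc
    have := hlm _ (hmem j) j
    rw [mul_assoc, ← alt_left, ← hwv] at this
    omega
  have hB : len S v ≤ len S (v * first (j + 1) s t) := by
    by_contra hc
    push Not at hc
    apply hmax
    refine ⟨_, hmem (j + 1), ?_, ?_⟩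
    · rw [alt_left (j + 1), mul_assoc, ← mul_assoc (first (j + 1) s t), hff, one_mul, hwv]
    · have := ((len_word hS (hmem (j + 1))).mul (isWord_one.2 (hfS (j + 1)))).len_le
      rw [mul_assoc, hff, mul_one] at this
      omega
  have hvs : len S v ≤ len S (v * s) ∧ len S v ≤ len S (v * t) := by
    unfold first at hA hB
    by_cases hj : Even j
    · simp only [hj, if_true, Nat.even_add_one, not_true, if_false] at hA hB
      exact ⟨hB, hA⟩
    · simp only [hj, if_true, Nat.even_add_one, not_false_eq_true, if_false] at hA hB
      exact ⟨hA, hB⟩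
  have hvα : v α ∈ cone Δ := ih (len S v) (by omega) v hv rfl α hα hvs.1
  have hvβ : v β ∈ cone Δ := ih (len S v) (by omega) v hv rfl β hβ hvs.2
  -- positivity of the coefficients
  have hu : 0 ≤ useq (-2 * B α β) (j + 1) ∧ 0 ≤ useq (-2 * B α β) (j + 1 + 1) := by
    rcases hΔ.offdiag α hα β hβ hαβ with hle | ⟨m, hm, hb⟩
    · exact ⟨(useq_nonneg (by linarith) _).1, (useq_nonneg (by linarith) _).1⟩
    · have hkm : j + 1 < m := by
        by_contra hc
        push Not at hc
        obtain ⟨q, hq, hqw⟩ := alt_short hS (hsS α hα) (hsS β hβ) (m := m) (by omega)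
          (alt_order hsymm hβ1 hα1 hm (by rw [hsymm]; exact hb)) hc
        have := ((len_word hS hv).mul hqw).len_le
        rw [← mul_assoc, ← hwv] at this
        change len S (w * s) ≤ _ at this
        omega
      have hsin := sin_pi_div_pos hm
      have hm0 : (0 : ℝ) < m := by positivity
      have hgen : ∀ i : ℕ, i ≤ m → 0 ≤ useq (-2 * B α β) i := by
        intro i hi
        have hi' : (i : ℝ) ≤ m := by exact_mod_cast hi
        rw [hb, show -2 * -Real.cos (Real.pi / m) = 2 * Real.cos (Real.pi / m) by ring,
          (useq_sin hsin.ne' _).1]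
        apply div_nonneg _ hsin.le
        apply Real.sin_nonneg_of_nonneg_of_le_pi
        · have := Real.pi_pos
          positivity
        · rw [mul_div_assoc', div_le_iff₀ hm0]
          nlinarith [Real.pi_pos]
      exact ⟨hgen _ (by omega), hgen _ (by omega)⟩
  rw [hwv, LinearEquiv.mul_apply, alt_apply hsymm hα1 hβ1]
  split_ifs
  · rw [map_add, map_smul, map_smul]
    exact cone_add (cone_smul hu.2 hvα) (cone_smul hu.1 hvβ)
  · rw [map_add, map_smul, map_smul]
    exact cone_add (cone_smul hu.1 hvα) (cone_smul hu.2 hvβ)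

lemma weyl_invariant {B : LinearMap.BilinForm ℝ V} (hsymm : ∀ x y : V, B x y = B y x)
    {Δ : Finset V} (hΔ : IsRootBasis B Δ) {w : V ≃ₗ[ℝ] V}
    (hw : w ∈ Subgroup.closure (gens B Δ)) : ∀ x y, B (w x) (w y) = B x y := by
  induction hw using Subgroup.closure_induction with
  | mem g hg =>
    obtain ⟨α, hα, rfl⟩ := hg
    intro x y
    have h := hΔ.unit α hα
    simp only [sref_app h, map_sub, map_smul, LinearMap.sub_apply, LinearMap.smul_apply,
      smul_eq_mul, h, hsymm x α]
    ring
  | one => intro x y; rfl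
  | mul a b _ _ ha hb => intro x y; rw [LinearEquiv.mul_apply, LinearEquiv.mul_apply, ha, hb]
  | inv a _ ha =>
    intro x y
    rw [← ha]
    simp only [← LinearEquiv.mul_apply, mul_inv_cancel, lin_one_app]

/-- Reduced decomposition with positivity. -/
lemma exists_reduced {B : LinearMap.BilinForm ℝ V} (hsymm : ∀ x y : V, B x y = B y x)
    {Δ : Finset V} (hΔ : IsRootBasis B Δ) {w : V ≃ₗ[ℝ] V}
    (hw : w ∈ Subgroup.closure (gens B Δ)) {n : ℕ} (hn : len (gens B Δ) w = n + 1) :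
    ∃ w' ∈ Subgroup.closure (gens B Δ), len (gens B Δ) w' = n ∧ ∃ γ ∈ Δ,
      w = w' * sref B γ ∧ w' γ ∈ cone Δ := by
  have hS := gens_inv hΔ
  have hww := len_word hS hw
  rw [hn] at hww
  obtain ⟨w1, hw1, t, ⟨γ, hγ, rfl⟩, hwt⟩ := hww.split
  have h1 := hw1.len_le
  have h2 := ((len_word hS hw1.mem).mul (isWord_one.2 (⟨γ, hγ, rfl⟩ : sref B γ ∈ gens B Δ))).len_le
  rw [← hwt] at h2
  refine ⟨w1, hw1.mem, by omega, γ, hγ, hwt, ?_⟩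
  apply pos_of_len hsymm hΔ _ w1 hw1.mem rfl γ hγ
  rw [← hwt]
  omega

lemma weight_nonneg {B : LinearMap.BilinForm ℝ V} (hsymm : ∀ x y : V, B x y = B y x)
    {Δ I : Finset V} {ω : V} (hI : IsWeight B Δ I ω) : ∀ γ ∈ Δ, 0 ≤ B ω γ := by
  intro γ hγ
  rw [hsymm]
  by_cases h : γ ∈ I
  · exact (hI.2.1 γ h).ge
  · exact (hI.2.2.1 γ hγ h).le

lemma orbit_step {B : LinearMap.BilinForm ℝ V} {Δ : Finset V} (hΔ : IsRootBasis B Δ)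
    {γ : V} (hγ : γ ∈ Δ) (w : V ≃ₗ[ℝ] V) (x y : V) :
    B x ((w * sref B γ) y) = B x (w y) - 2 * B γ y * B x (w γ) := by
  rw [LinearEquiv.mul_apply, sref_app (hΔ.unit γ hγ)]
  simp only [map_sub, map_smul, smul_eq_mul]

lemma orbit_le {B : LinearMap.BilinForm ℝ V} (hsymm : ∀ x y : V, B x y = B y x)
    {Δ I J : Finset V} (hΔ : IsRootBasis B Δ) {ω ω' : V}
    (hI : IsWeight B Δ I ω) (hJ : IsWeight B Δ J ω') (n : ℕ) :
    ∀ w ∈ Subgroup.closure (gens B Δ), len (gens B Δ) w = n → B ω (w ω') ≤ B ω ω' := by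
  induction n with
  | zero =>
    intro w hw hn
    have := len_word (gens_inv hΔ) hw
    rw [hn, isWord_zero] at this
    rw [this]; rfl
  | succ n ih =>
    intro w hw hn
    obtain ⟨w', hw', hl, γ, hγ, rfl, hc⟩ := exists_reduced hsymm hΔ hw hn
    rw [orbit_step hΔ hγ]
    have h1 := ih w' hw' hl
    have h2 : 0 ≤ B ω (w' γ) := cone_nonneg (weight_nonneg hsymm hI) hc
    have h3 := weight_nonneg hsymm hJ γ hγ
    rw [hsymm] at h3
    have := mul_nonneg h3 h2
    linarith

lemma orbit_self {B : LinearMap.BilinForm ℝ V} (hsymm : ∀ x y : V, B x y = B y x)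
    {Δ I : Finset V} (hΔ : IsRootBasis B Δ) {ω : V}
    (hI : IsWeight B Δ I ω) (hself : B ω ω ≤ 1) (n : ℕ) :
    ∀ w ∈ Subgroup.closure (gens B Δ), len (gens B Δ) w = n → w ω = ω ∨ B ω (w ω) ≤ 0 := by
  induction n with
  | zero =>
    intro w hw hn
    have := len_word (gens_inv hΔ) hw
    rw [hn, isWord_zero] at this
    left
    rw [this]; rfl
  | succ n ih =>
    intro w hw hn
    obtain ⟨w', hw', hl, γ, hγ, rfl, hc⟩ := exists_reduced hsymm hΔ hw hn
    have h2 : 0 ≤ B ω (w' γ) := cone_nonneg (weight_nonneg hsymm hI) hc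
    by_cases hγI : γ ∈ I
    · have h0 := hI.2.1 γ hγI
      have : (w' * sref B γ) ω = w' ω := by
        rw [LinearEquiv.mul_apply, sref_app (hΔ.unit γ hγ), h0]; simp
      rw [this]
      exact ih w' hw' hl
    · right
      rw [orbit_step hΔ hγ]
      have h3 := hI.2.2.2.1 γ hγ hγI
      rcases ih w' hw' hl with he | hle
      · have h4 : B ω (w' γ) = B γ ω := by
          have := weyl_invariant hsymm hΔ hw' ω γ
          rw [he] at this
          rw [this, hsymm]
        rw [he, h4]
        nlinarith
      · have := mul_nonneg (show 0 ≤ B γ ω by linarith) h2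
        linarith


/-- Maxwell's inequality (1.15), extended. For a based root
system of level `1` or `2` in a non-degenerate quadratic space, any two
distinct vectors of `Ω` satisfy `B(x,y) ≤ 0`. -/
theorem omega_pairwise_nonpos
    {V : Type*} [AddCommGroup V] [Module ℝ V] [FiniteDimensional ℝ V]
    (B : LinearMap.BilinForm ℝ V) (hsymm : ∀ x y : V, B x y = B y x)
    (hnd : B.Nondegenerate)
    (Δ : Finset V) (hΔ : IsRootBasis B Δ)
    (hlev : HasLevel B Δ 1 ∨ HasLevel B Δ 2) :
    ∀ x ∈ Omega B Δ, ∀ y ∈ Omega B Δ, x ≠ y → B x y ≤ 0 := by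
  have hneg : ∃ x, B x x < 0 := by
    have h0 : ¬ LevelLE B Δ 0 := by
      rcases hlev with h | h
      · exact h.2 0 (by norm_num)
      · exact h.2 0 (by norm_num)
    by_contra hcon
    push Not at hcon
    exact h0 fun I _ x _ => hcon x
  have hlev' : LevelLE B Δ 1 ∨ LevelLE B Δ 2 := hlev.imp (fun h => h.1) (fun h => h.1)
  rintro x ⟨w1, hw1, ω1, ⟨I, hI⟩, rfl⟩ y ⟨w2, hw2, ω2, ⟨J, hJ⟩, rfl⟩ hxy
  rw [weylGroup_eq hΔ] at hw1 hw2
  have hw : w1⁻¹ * w2 ∈ Subgroup.closure (gens B Δ) := mul_mem (inv_mem hw1) hw2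
  have hback : w1 ((w1⁻¹ * w2) ω2) = w2 ω2 := by
    rw [← LinearEquiv.mul_apply, mul_inv_cancel_left]
  rw [← hback, weyl_invariant hsymm hΔ hw1]
  by_cases he : ω1 = ω2
  · subst he
    rcases orbit_self hsymm hΔ hI (weight_self_le hsymm hnd hΔ hlev' hneg hI) _ _ hw rfl with h | h
    · rw [h] at hback
      exact absurd hback hxy
    · exact h
  · exact (orbit_le hsymm hΔ hI hJ _ _ hw rfl).trans
      (weights_pair_nonpos hsymm hnd hΔ hlev' hneg hI hJ he)

end BoydMaxwell
end

section
/- Let 𝒫 ⊂ ℝ^d be a polytope of dimension d ≥ 3 and let x be a point in the exterior of 𝒫 (i.e. x ∉ 𝒫). Then there exist two disjoint faces F and G of 𝒫 and a line L through x that meets both F and G. -/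
namespace BoydMaxwell

/-- generalized Radon, after Bajmóczy–Bárány; Lemma
`lem:radon`, existence part. Let `𝒫 ⊂ ℝ^d` be a full-dimensional polytope,
`d ≥ 3`, and let `x` be a point in the exterior of `𝒫`.  Then there are two
disjoint (exposed) faces `F` and `G` of `𝒫` and a line through `x` meeting
both, i.e. points `u ∈ F`, `v ∈ G` collinear with `x`. -/
theorem exists_line_through_disjoint_faces
    (d : ℕ) (hd : 3 ≤ d) (s : Finset (EuclideanSpace ℝ (Fin d)))
    (P : Set (EuclideanSpace ℝ (Fin d)))
    (hP : P = convexHull ℝ (s : Set (EuclideanSpace ℝ (Fin d))))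
    (hdim : affineSpan ℝ P = ⊤)
    (x : EuclideanSpace ℝ (Fin d)) (hx : x ∉ P) :
    ∃ F G : Set (EuclideanSpace ℝ (Fin d)),
      IsExposed ℝ P F ∧ IsExposed ℝ P G ∧ F ∩ G = ∅ ∧
      ∃ u ∈ F, ∃ v ∈ G, Collinear ℝ {x, u, v} := by
  have hconv : Convex ℝ P := hP ▸ convex_convexHull ℝ _
  have hcomp : IsCompact P := hP ▸ s.finite_toSet.isCompact_convexHull ℝ
  have hint : (interior P).Nonempty := hconv.interior_nonempty_iff_affineSpan_eq_top.2 hdim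
  obtain ⟨p₀, hp₀⟩ := hint
  have hp₀P := interior_subset hp₀
  obtain ⟨f, r, hfx, hf⟩ := geometric_hahn_banach_point_closed hconv hcomp.isClosed hx
  have hg : ∀ y ∈ P, 0 < f y - f x := fun y hy => by linarith [hf y hy]
  -- a vector `w` with `f w = 1`
  obtain ⟨w, hw⟩ : ∃ w, f w = 1 := by
    refine ⟨(f p₀ - f x)⁻¹ • (p₀ - x), ?_⟩
    have := (hg p₀ hp₀P).ne'
    simp [this]
  -- the projective map
  set φ : EuclideanSpace ℝ (Fin d) → EuclideanSpace ℝ (Fin d) :=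
    fun y => (f y - f x)⁻¹ • (y - x + w) with hφ
  have hφc : ContinuousOn φ P := by
    have h : ContinuousOn (fun y => (f y - f x)⁻¹) P :=
      ContinuousOn.inv₀ (by fun_prop) (fun y hy => (hg y hy).ne')
    rw [hφ]
    fun_prop
  have hQcomp : IsCompact (φ '' P) := hcomp.image_of_continuousOn hφc
  have hQconv : Convex ℝ (φ '' P) := by
    rintro _ ⟨y, hy, rfl⟩ _ ⟨z, hz, rfl⟩ a b ha hb hab
    have h1 := hg y hy
    have h2 := hg z hz
    set α := a * (f y - f x)⁻¹ with hα
    set β := b * (f z - f x)⁻¹ with hβ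
    have hα0 : 0 ≤ α := by positivity
    have hβ0 : 0 ≤ β := by positivity
    have hαa : α * (f y - f x) = a := by rw [hα]; field_simp
    have hβb : β * (f z - f x) = b := by rw [hβ]; field_simp
    have hs : 0 < α + β := by
      rcases hα0.eq_or_lt with h | h
      · rcases hβ0.eq_or_lt with h' | h'
        · rw [← h] at hαa; rw [← h'] at hβb; linarith
        · linarith
      · linarith
    refine ⟨(α / (α + β)) • y + (β / (α + β)) • z, hconv hy hz (by positivity) (by positivity)
      (by field_simp), ?_⟩
    have hq : (f ((α / (α + β)) • y + (β / (α + β)) • z) - f x)⁻¹ = α + β := by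
      rw [inv_eq_iff_eq_inv]
      simp only [map_add, map_smul, smul_eq_mul]
      field_simp
      linarith
    simp only [hφ]
    rw [hq, smul_smul, smul_smul, ← hα, ← hβ]
    have e1 : (α + β) * (α / (α + β)) = α := by field_simp
    have e2 : (α + β) * (β / (α + β)) = β := by field_simp
    rw [smul_add, smul_sub, smul_add, smul_smul, smul_smul, e1, e2]
    module
  -- interior points of the image
  obtain ⟨q₀, hq₀⟩ : (interior (φ '' P)).Nonempty := by
    set ψ : EuclideanSpace ℝ (Fin d) → EuclideanSpace ℝ (Fin d) :=
      fun z => (f z - 1)⁻¹ • z - w + x with hψ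
    have hV : IsOpen {z | 1 < f z} := isOpen_lt continuous_const f.continuous
    have hψc : ContinuousOn ψ {z | 1 < f z} := by
      have h : ContinuousOn (fun z => (f z - 1)⁻¹) {z | 1 < f z} :=
        ContinuousOn.inv₀ (by fun_prop) (fun y hy => (sub_pos.2 hy).ne')
      rw [hψ]
      fun_prop
    have hU := hψc.isOpen_inter_preimage hV (isOpen_interior (s := P))
    refine ⟨φ p₀, mem_interior.2 ⟨_, ?_, hU, ?_⟩⟩
    · rintro z ⟨hz, hzP⟩
      refine ⟨ψ z, interior_subset hzP, ?_⟩
      have hz' : f z - 1 ≠ 0 := (sub_pos.2 hz).ne'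
      have e : (f (ψ z) - f x)⁻¹ = f z - 1 := by
        rw [inv_eq_iff_eq_inv]
        simp only [hψ, map_add, map_sub, map_smul, smul_eq_mul, hw]
        field_simp
        ring
      simp only [hφ]
      rw [e]
      simp only [hψ]
      rw [show (f z - 1)⁻¹ • z - w + x - x + w = (f z - 1)⁻¹ • z by abel, smul_smul,
        mul_inv_cancel₀ hz', one_smul]
    · have h0 := hg p₀ hp₀P
      have e : f (φ p₀) - 1 = (f p₀ - f x)⁻¹ := by
        simp only [hφ, map_add, map_sub, map_smul, smul_eq_mul, hw]
        field_simp
        ring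
      refine ⟨?_, ?_⟩
      · have : 0 < f (φ p₀) - 1 := by rw [e]; positivity
        simpa using this
      · have : ψ (φ p₀) = p₀ := by
          simp only [hψ]
          rw [e, inv_inv]
          simp only [hφ]
          rw [smul_smul, mul_inv_cancel₀ h0.ne', one_smul]
          abel
        simpa [this] using hp₀
  -- the difference body
  set D : Set (EuclideanSpace ℝ (Fin d)) := (fun p : _ × _ => p.1 - p.2) '' ((φ '' P) ×ˢ (φ '' P))
    with hD
  have hDcomp : IsCompact D := (hQcomp.prod hQcomp).image (by fun_prop)
  have hDmem : ∀ y ∈ P, ∀ z ∈ P, φ y - φ z ∈ D := fun y hy z hz =>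
    ⟨(φ y, φ z), ⟨⟨y, hy, rfl⟩, ⟨z, hz, rfl⟩⟩, rfl⟩
  have hDconv : Convex ℝ D := by
    rintro _ ⟨⟨a, b⟩, ⟨ha, hb⟩, rfl⟩ _ ⟨⟨a', b'⟩, ⟨ha', hb'⟩, rfl⟩ k l hk hl hkl
    refine ⟨(k • a + l • a', k • b + l • b'), ⟨hQconv ha ha' hk hl hkl, hQconv hb hb' hk hl hkl⟩, ?_⟩
    simp only
    module
  have hDint : (interior D).Nonempty := by
    refine ⟨q₀ - φ p₀, mem_interior.2 ⟨(fun z => z + φ p₀) ⁻¹' interior (φ '' P), ?_,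
      isOpen_interior.preimage (by fun_prop), by simpa using hq₀⟩⟩
    intro z hz
    exact ⟨(z + φ p₀, φ p₀), ⟨interior_subset hz, ⟨p₀, hp₀P, rfl⟩⟩, by simp⟩
  -- maximal chord in direction `w`
  have hw0 : w ≠ 0 := by rintro rfl; simp at hw
  obtain ⟨z₀, ⟨hz₀D, t, rfl⟩, hmax⟩ : ∃ z ∈ D ∩ {z | ∃ t : ℝ, z = t • w},
      ∀ z' ∈ D ∩ {z | ∃ t : ℝ, z = t • w}, f z' ≤ f z := by
    have hcl : IsClosed {z : EuclideanSpace ℝ (Fin d) | ∃ t : ℝ, z = t • w} := by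
      have : {z : EuclideanSpace ℝ (Fin d) | ∃ t : ℝ, z = t • w} = {z | z = f z • w} := by
        ext z
        constructor
        · rintro ⟨t, rfl⟩
          simp [hw]
        · intro h
          exact ⟨_, h⟩
      rw [this]
      exact isClosed_eq continuous_id (by fun_prop)
    exact (hDcomp.inter_right hcl).exists_isMaxOn
      ⟨0, by simpa using hDmem p₀ hp₀P p₀ hp₀P, 0, by simp⟩ f.continuous.continuousOn
  have hnot : t • w ∉ interior D := by
    intro h
    have hc : Filter.Tendsto (fun ε : ℝ => (t + ε) • w) (nhdsWithin 0 (Set.Ioi 0))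
        (nhds (t • w)) := by
      have : Continuous (fun ε : ℝ => (t + ε) • w) := by fun_prop
      have := this.tendsto 0
      simp only [add_zero] at this
      exact this.mono_left nhdsWithin_le_nhds
    have h1 := hc.eventually (isOpen_interior.mem_nhds h)
    obtain ⟨ε, h2, h3⟩ := (h1.and self_mem_nhdsWithin).exists
    have := hmax _ ⟨interior_subset h2, _, rfl⟩
    simp only [map_smul, hw, smul_eq_mul, mul_one] at this
    have h3' : 0 < ε := h3
    linarith
  obtain ⟨c, hc⟩ := geometric_hahn_banach_open_point hDconv.interior isOpen_interior hnot
  have hcD : ∀ a ∈ D, c a ≤ c (t • w) := by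
    have hsub : D ⊆ closure (interior D) := by
      rw [hDconv.closure_interior_eq_closure_of_nonempty_interior hDint]
      exact subset_closure
    intro a ha
    exact closure_minimal (t := {a | c a ≤ c (t • w)}) (fun b hb => (hc b hb).le)
      (isClosed_le c.continuous continuous_const) (hsub ha)
  have hpos : 0 < c (t • w) := by
    obtain ⟨a, ha⟩ := hDint
    have h1 := hc a ha
    obtain ⟨⟨_, _⟩, ⟨⟨y, hy, rfl⟩, ⟨z, hz, rfl⟩⟩, rfl⟩ := interior_subset ha
    have h2 := hcD _ (hDmem z hz y hy)
    simp only [map_sub] at h1 h2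
    linarith
  obtain ⟨⟨_, _⟩, ⟨⟨u, hu, rfl⟩, ⟨v, hv, rfl⟩⟩, huv⟩ := hz₀D
  simp only at huv
  set M := c (φ u) with hM
  set m := c (φ v) with hm
  have hMm : c (t • w) = M - m := by rw [← huv, map_sub]
  have hle : ∀ y ∈ P, c (φ y) ≤ M := fun y hy => by
    have := hcD _ (hDmem y hy v hv); rw [hMm, map_sub] at this; linarith
  have hge : ∀ y ∈ P, m ≤ c (φ y) := fun y hy => by
    have := hcD _ (hDmem u hu y hy); rw [hMm, map_sub] at this; linarith
  have hcφ : ∀ y ∈ P, c y - c x + c w = c (φ y) * (f y - f x) := fun y hy => by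
    have := hg y hy
    simp only [hφ, map_smul, map_add, map_sub, smul_eq_mul]
    field_simp
  refine ⟨(c - M • f).toExposed P, (m • f - c).toExposed P,
    ContinuousLinearMap.toExposed.isExposed, ContinuousLinearMap.toExposed.isExposed, ?_,
    u, ⟨hu, ?_⟩, v, ⟨hv, ?_⟩, ?_⟩
  · rw [Set.eq_empty_iff_forall_notMem]
    rintro p ⟨⟨hp, h1⟩, ⟨_, h2⟩⟩
    have h1 := h1 u hu
    have h2 := h2 v hv
    simp only [ContinuousLinearMap.sub_apply, ContinuousLinearMap.smul_apply, smul_eq_mul] at h1 h2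
    have e1 := hcφ u hu
    have e2 := hcφ v hv
    rw [← hM] at e1
    rw [← hm] at e2
    have h3 := hg p hp
    have : 0 < (M - m) * (f p - f x) := mul_pos (hMm ▸ hpos) h3
    linarith
  · intro y hy
    have e1 := hcφ u hu
    rw [← hM] at e1
    have e2 := hcφ y hy
    have := mul_le_mul_of_nonneg_right (hle y hy) (hg y hy).le
    simp only [ContinuousLinearMap.sub_apply, ContinuousLinearMap.smul_apply, smul_eq_mul]
    linarith
  · intro y hy
    have e1 := hcφ v hv
    rw [← hm] at e1
    have e2 := hcφ y hy
    have := mul_le_mul_of_nonneg_right (hge y hy) (hg y hy).le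
    simp only [ContinuousLinearMap.sub_apply, ContinuousLinearMap.smul_apply, smul_eq_mul]
    linarith
  · have h1 := hg u hu
    have h2 := hg v hv
    have hfuv := congrArg f huv
    simp only [hφ, map_smul, map_add, map_sub, smul_eq_mul, hw, mul_one] at hfuv
    have ht : (f u - f x)⁻¹ - (f v - f x)⁻¹ = t := by
      rw [← hfuv]
      field_simp
      ring
    have key : (f u - f x)⁻¹ • (u - x) = (f v - f x)⁻¹ • (v - x) := by
      have := huv
      simp only [hφ, smul_add, ← ht, sub_smul _ _ w] at this
      rw [← sub_eq_zero] at this ⊢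
      rw [← this]
      abel
    rw [collinear_iff_of_mem (p₀ := x) (by simp)]
    refine ⟨u - x, ?_⟩
    rintro p (rfl | rfl | rfl)
    · exact ⟨0, by simp⟩
    · exact ⟨1, by simp⟩
    · refine ⟨(f p - f x) * (f u - f x)⁻¹, ?_⟩
      rw [mul_smul, key, smul_smul, mul_inv_cancel₀ h2.ne', one_smul]
      simp

end BoydMaxwell
end
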